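/- arXiv:2209.07014 — 7 statements merged into one kernel-verified Lean document; each statement's English description precedes it below -/
import Mathlib

section
/- Suppose Υ_k is positive definite for every k ∈ {0,…,N}. Then for every initial state x_0, every disturbance sequence (d_k) and every control sequence (u_k), the cost satisfies the completion-of-squares identity J_N = x_0'P_0 x_0 + 2 x_0'f_0 + r'P_{N+1} r + Σ_{k=0}^N [ r'Q r + d_k'E'R E d_k − h_k'Υ_k^{-1} h_k + d_k'E'P_{k+1} E d_k + 2 d_k'E'f_{k+1} + (u_k + Υ_k^{-1}M_k x_k + Υ_k^{-1}h_k)'Υ_k (u_k + Υ_k^{-1}M_k x_k + Υ_k^{-1}h_k) ]. -/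
open Matrix Finset

/-!
Let `V k x = xᵀ P k x + 2 xᵀ f k`. The stage cost at `k` plus `V (k + 1)` at the next state is a
quadratic function of the control with Hessian `Υ k` and linear part `M k x + h k`. Completing its
square leaves a quadratic function of the current state, which the backward recursions identify
with `V k` up to terms that do not involve the state. The terminal cost is `V (N + 1)` up to a
constant, so these one-step identities telescope.
-/

section CommSemiring

variable {K m n : Type*} [CommSemiring K]

theorem isSymm_transpose_mul_mul [Fintype m] {S : Matrix m m K} (hS : S.IsSymm)
    (C : Matrix m n K) : (Cᵀ * S * C).IsSymm := by
  simp only [IsSymm, transpose_mul, transpose_transpose, hS.eq, Matrix.mul_assoc]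

variable [Fintype m] [Fintype n]

/-- The quadratic polynomial function `x ↦ xᵀ S x + 2 xᵀ b` without constant term, for which
pullbacks, translations and completion of the square act on the pair of coefficients `(S, b)`.
The factor `2` is kept out of `b` so that completing the square involves no division by `2`. -/
def quadPoly (S : Matrix n n K) (b x : n → K) : K :=
  x ⬝ᵥ (S *ᵥ x) + 2 * (x ⬝ᵥ b)

theorem dotProduct_mulVec_swap {S : Matrix n n K} (hS : S.IsSymm) (x y : n → K) :
    x ⬝ᵥ (S *ᵥ y) = y ⬝ᵥ (S *ᵥ x) := by
  rw [← dotProduct_transpose_mulVec, hS.eq]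

theorem quadPoly_add_quadPoly (S T : Matrix n n K) (b c x : n → K) :
    quadPoly S b x + quadPoly T c x = quadPoly (S + T) (b + c) x := by
  simp only [quadPoly, add_mulVec, dotProduct_add]
  ring

theorem quadPoly_mulVec (S : Matrix m m K) (b : m → K) (C : Matrix m n K) (x : n → K) :
    quadPoly S b (C *ᵥ x) = quadPoly (Cᵀ * S * C) (Cᵀ *ᵥ b) x := by
  simp only [quadPoly, ← mulVec_mulVec, dotProduct_transpose_mulVec, dotProduct_comm]

theorem quadPoly_add {S : Matrix n n K} (hS : S.IsSymm) (b x y : n → K) :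
    quadPoly S b (x + y) = quadPoly S (S *ᵥ y + b) x + quadPoly S b y := by
  simp only [quadPoly, mulVec_add, dotProduct_add, add_dotProduct, dotProduct_mulVec_swap hS y x]
  ring

theorem dotProduct_mulVec_add {S : Matrix n n K} (hS : S.IsSymm) (x y : n → K) :
    (x + y) ⬝ᵥ (S *ᵥ (x + y)) = quadPoly S (S *ᵥ y) x + y ⬝ᵥ (S *ᵥ y) := by
  simpa [quadPoly] using quadPoly_add hS 0 x y

end CommSemiring

section CommRing

variable {K n : Type*} [CommRing K] [Fintype n]

theorem quadPoly_sub_quadPoly (S T : Matrix n n K) (b c x : n → K) :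
    quadPoly S b x - quadPoly T c x = quadPoly (S - T) (b - c) x := by
  simp only [quadPoly, sub_mulVec, dotProduct_sub]
  ring

theorem dotProduct_mulVec_sub {S : Matrix n n K} (hS : S.IsSymm) (x r : n → K) :
    (x - r) ⬝ᵥ (S *ᵥ (x - r)) = quadPoly S (-(S *ᵥ r)) x + r ⬝ᵥ (S *ᵥ r) := by
  simpa [sub_eq_add_neg, mulVec_neg] using dotProduct_mulVec_add hS x (-r)

theorem quadPoly_eq_complete_square [DecidableEq n] {S : Matrix n n K} (hS : S.IsSymm)
    (hdet : IsUnit S.det) (b x : n → K) :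
    quadPoly S b x =
      (x + S⁻¹ *ᵥ b) ⬝ᵥ (S *ᵥ (x + S⁻¹ *ᵥ b)) - b ⬝ᵥ (S⁻¹ *ᵥ b) := by
  have hcancel : S *ᵥ (S⁻¹ *ᵥ b) = b := by rw [mulVec_mulVec, mul_nonsing_inv S hdet, one_mulVec]
  rw [dotProduct_mulVec_add hS, hcancel, dotProduct_comm b, add_sub_cancel_right]

end CommRing

section BackwardRecursion

variable {K n m : Type*} [CommRing K] [Fintype n] [Fintype m]
  {A Q R P P' : Matrix n n K} {B : Matrix n m K} {Υ : Matrix m m K} {M : Matrix m n K}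
  {f f' r w : n → K} {h : m → K}

theorem quadPoly_control (hΥ : Υ = Bᵀ * (R + P') * B) (hM : M = Bᵀ * P' * A)
    (hh : h = Bᵀ *ᵥ ((R + P') *ᵥ w + f')) (x : n → K) (u : m → K) :
    quadPoly R (R *ᵥ w) (B *ᵥ u) + quadPoly P' (P' *ᵥ (A *ᵥ x + w) + f') (B *ᵥ u) =
      quadPoly Υ (M *ᵥ x + h) u := by
  have hlinear : Bᵀ *ᵥ (R *ᵥ w + (P' *ᵥ (A *ᵥ x + w) + f')) = M *ᵥ x + h := by
    simp only [hM, hh, ← mulVec_mulVec, add_mulVec, mulVec_add]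
    abel
  rw [quadPoly_add_quadPoly, quadPoly_mulVec, ← hΥ, hlinear]

variable [DecidableEq m]

theorem quadPoly_riccati (hP : P = Q + Aᵀ * P' * A - Mᵀ * Υ⁻¹ * M)
    (hf : f = Aᵀ *ᵥ (P' *ᵥ w + f') - Mᵀ *ᵥ (Υ⁻¹ *ᵥ h) - Q *ᵥ r) (x : n → K) :
    quadPoly P f x =
      quadPoly Q (-(Q *ᵥ r)) x + quadPoly P' (P' *ᵥ w + f') (A *ᵥ x)
        - quadPoly Υ⁻¹ (Υ⁻¹ *ᵥ h) (M *ᵥ x) := by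
  rw [quadPoly_mulVec, quadPoly_mulVec, quadPoly_add_quadPoly, quadPoly_sub_quadPoly, ← hP, hf]
  congr 1
  abel

theorem stage_cost_add_quadPoly_next (hQ : Q.IsSymm) (hR : R.IsSymm) (hP' : P'.IsSymm)
    (hdet : IsUnit Υ.det)
    (hΥ : Υ = Bᵀ * (R + P') * B) (hM : M = Bᵀ * P' * A)
    (hP : P = Q + Aᵀ * P' * A - Mᵀ * Υ⁻¹ * M)
    (hh : h = Bᵀ *ᵥ ((R + P') *ᵥ w + f'))
    (hf : f = Aᵀ *ᵥ (P' *ᵥ w + f') - Mᵀ *ᵥ (Υ⁻¹ *ᵥ h) - Q *ᵥ r) (x : n → K) (u : m → K) :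
    (x - r) ⬝ᵥ (Q *ᵥ (x - r)) + (B *ᵥ u + w) ⬝ᵥ (R *ᵥ (B *ᵥ u + w))
        + quadPoly P' f' (A *ᵥ x + B *ᵥ u + w) =
      quadPoly P f x
        + (r ⬝ᵥ (Q *ᵥ r) + w ⬝ᵥ (R *ᵥ w) - h ⬝ᵥ (Υ⁻¹ *ᵥ h) + w ⬝ᵥ (P' *ᵥ w) + 2 * (w ⬝ᵥ f')
          + (u + Υ⁻¹ *ᵥ (M *ᵥ x) + Υ⁻¹ *ᵥ h) ⬝ᵥ
              (Υ *ᵥ (u + Υ⁻¹ *ᵥ (M *ᵥ x) + Υ⁻¹ *ᵥ h))) := by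
  have hΥsymm : Υ.IsSymm := hΥ ▸ isSymm_transpose_mul_mul (hR.add hP') B
  have next_cost : quadPoly P' f' (A *ᵥ x + B *ᵥ u + w) =
      quadPoly P' (P' *ᵥ (A *ᵥ x + w) + f') (B *ᵥ u)
        + (quadPoly P' (P' *ᵥ w + f') (A *ᵥ x) + quadPoly P' f' w) := by
    rw [← quadPoly_add hP', ← quadPoly_add hP', add_left_comm, add_assoc]
  have control_square : quadPoly Υ (M *ᵥ x + h) u =
      (u + Υ⁻¹ *ᵥ (M *ᵥ x) + Υ⁻¹ *ᵥ h) ⬝ᵥ (Υ *ᵥ (u + Υ⁻¹ *ᵥ (M *ᵥ x) + Υ⁻¹ *ᵥ h))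
        - (quadPoly Υ⁻¹ (Υ⁻¹ *ᵥ h) (M *ᵥ x) + h ⬝ᵥ (Υ⁻¹ *ᵥ h)) := by
    rw [quadPoly_eq_complete_square hΥsymm hdet, dotProduct_mulVec_add hΥsymm.inv, mulVec_add,
      ← add_assoc]
  rw [dotProduct_mulVec_sub hQ, dotProduct_mulVec_add hR, next_cost, quadPoly_riccati hP hf]
  have disturbance_cost : quadPoly P' f' w = w ⬝ᵥ (P' *ᵥ w) + 2 * (w ⬝ᵥ f') := rfl
  linear_combination quadPoly_control hΥ hM hh x u + control_square + disturbance_cost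

theorem isSymm_of_riccati {N : ℕ} {A Q R P : ℕ → Matrix n n K} {B : ℕ → Matrix n m K}
    {Υ : ℕ → Matrix m m K} {M : ℕ → Matrix m n K}
    (hQ : ∀ k ≤ N, (Q k).IsSymm) (hR : ∀ k ≤ N, (R k).IsSymm) (hPterm : (P (N + 1)).IsSymm)
    (hΥ : ∀ k ≤ N, Υ k = (B k)ᵀ * (R k + P (k + 1)) * B k)
    (hP : ∀ k ≤ N, P k = Q k + (A k)ᵀ * P (k + 1) * A k - (M k)ᵀ * (Υ k)⁻¹ * M k) :
    ∀ k ≤ N + 1, (P k).IsSymm := by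
  intro k hk
  induction hk using Nat.decreasingInduction with
  | self => exact hPterm
  | of_succ k hk hnext =>
    have hkN : k ≤ N := Nat.le_of_lt_succ hk
    have hΥsymm : (Υ k).IsSymm := hΥ k hkN ▸ isSymm_transpose_mul_mul ((hR k hkN).add hnext) (B k)
    rw [hP k hkN]
    exact ((hQ k hkN).add (isSymm_transpose_mul_mul hnext _)).sub
      (isSymm_transpose_mul_mul hΥsymm.inv _)

end BackwardRecursion

theorem sum_range_add_eq_add_sum_range {α : Type*} [AddCommMonoid α] {c g V : ℕ → α} {n : ℕ}
    (hstep : ∀ k < n, c k + V (k + 1) = V k + g k) :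
    ∑ k ∈ range n, c k + V n = V 0 + ∑ k ∈ range n, g k := by
  induction n with
  | zero => simp
  | succ n ih =>
    rw [sum_range_succ, sum_range_succ, add_assoc, hstep n n.lt_succ_self, ← add_assoc,
      ih fun k hk => hstep k (hk.trans n.lt_succ_self), add_assoc]

theorem completion_of_squares_identity_general {K n m l : Type*} [CommRing K]
    [Fintype n] [Fintype m] [DecidableEq m] [Fintype l] (N : ℕ)
    {A Q R P : ℕ → Matrix n n K} {B : ℕ → Matrix n m K} {E : ℕ → Matrix n l K}
    {Υ : ℕ → Matrix m m K} {M : ℕ → Matrix m n K} {r : ℕ → n → K}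
    (hQ : ∀ k ≤ N, (Q k).IsSymm) (hR : ∀ k ≤ N, (R k).IsSymm) (hPterm : (P (N + 1)).IsSymm)
    (hΥ : ∀ k ≤ N, Υ k = (B k)ᵀ * (R k + P (k + 1)) * B k)
    (hM : ∀ k ≤ N, M k = (B k)ᵀ * P (k + 1) * A k)
    (hP : ∀ k ≤ N, P k = Q k + (A k)ᵀ * P (k + 1) * A k - (M k)ᵀ * (Υ k)⁻¹ * M k)
    (hΥdet : ∀ k ≤ N, IsUnit (Υ k).det)
    {d : ℕ → l → K} {f : ℕ → n → K} {h : ℕ → m → K}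
    (hfterm : f (N + 1) = -(P (N + 1) *ᵥ r (N + 1)))
    (hh : ∀ k ≤ N, h k =
      ((B k)ᵀ * (R k + P (k + 1)) * E k) *ᵥ d k + (B k)ᵀ *ᵥ f (k + 1))
    (hf : ∀ k ≤ N, f k = ((A k)ᵀ * P (k + 1) * E k) *ᵥ d k + (A k)ᵀ *ᵥ f (k + 1)
      - (M k)ᵀ *ᵥ ((Υ k)⁻¹ *ᵥ h k) - Q k *ᵥ r k)
    {x : ℕ → n → K} {u : ℕ → m → K}
    (hx : ∀ k ≤ N, x (k + 1) = A k *ᵥ x k + B k *ᵥ u k + E k *ᵥ d k) :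
    (∑ k ∈ range (N + 1),
        ((x k - r k) ⬝ᵥ (Q k *ᵥ (x k - r k))
          + (B k *ᵥ u k + E k *ᵥ d k) ⬝ᵥ (R k *ᵥ (B k *ᵥ u k + E k *ᵥ d k))))
      + (x (N + 1) - r (N + 1)) ⬝ᵥ (P (N + 1) *ᵥ (x (N + 1) - r (N + 1)))
    = x 0 ⬝ᵥ (P 0 *ᵥ x 0) + 2 * (x 0 ⬝ᵥ f 0) + r (N + 1) ⬝ᵥ (P (N + 1) *ᵥ r (N + 1))
      + ∑ k ∈ range (N + 1),
          (r k ⬝ᵥ (Q k *ᵥ r k)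
            + (E k *ᵥ d k) ⬝ᵥ (R k *ᵥ (E k *ᵥ d k))
            - h k ⬝ᵥ ((Υ k)⁻¹ *ᵥ h k)
            + (E k *ᵥ d k) ⬝ᵥ (P (k + 1) *ᵥ (E k *ᵥ d k))
            + 2 * ((E k *ᵥ d k) ⬝ᵥ f (k + 1))
            + (u k + (Υ k)⁻¹ *ᵥ (M k *ᵥ x k) + (Υ k)⁻¹ *ᵥ h k) ⬝ᵥ
                (Υ k *ᵥ (u k + (Υ k)⁻¹ *ᵥ (M k *ᵥ x k) + (Υ k)⁻¹ *ᵥ h k))) := by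
  have hPsymm := isSymm_of_riccati hQ hR hPterm hΥ hP
  have hstep := fun k (hk : k < N + 1) =>
    have hkN : k ≤ N := Nat.le_of_lt_succ hk
    have hh' : h k = (B k)ᵀ *ᵥ ((R k + P (k + 1)) *ᵥ (E k *ᵥ d k) + f (k + 1)) := by
      simp only [hh k hkN, ← mulVec_mulVec, mulVec_add]
    have hf' : f k = (A k)ᵀ *ᵥ (P (k + 1) *ᵥ (E k *ᵥ d k) + f (k + 1))
        - (M k)ᵀ *ᵥ ((Υ k)⁻¹ *ᵥ h k) - Q k *ᵥ r k := by
      simp only [hf k hkN, ← mulVec_mulVec, mulVec_add]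
    hx k hkN ▸ stage_cost_add_quadPoly_next (hQ k hkN) (hR k hkN) (hPsymm (k + 1) hk)
      (hΥdet k hkN) (hΥ k hkN) (hM k hkN) (hP k hkN) hh' hf' (x k) (u k)
  have htelescope :=
    sum_range_add_eq_add_sum_range (V := fun k => quadPoly (P k) (f k) (x k)) hstep
  rw [dotProduct_mulVec_sub hPterm, ← hfterm, ← add_assoc, htelescope, add_right_comm]
  rfl

/-- **Completion-of-squares identity for the finite-horizon disturbance rejection cost.**
If `Υ k` is positive definite for every `k ∈ {0,…,N}`, then along any trajectory of
`x_{k+1} = A x_k + B u_k + E d_k` the cost `J_N` equals the completed-square expression. -/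
theorem completion_of_squares_identity
    (n m N : ℕ)
    (A Q R : Matrix (Fin n) (Fin n) ℝ)
    (B E : Matrix (Fin n) (Fin m) ℝ)
    (r : Fin n → ℝ)
    (hQ : Q.PosSemidef) (hR : R.PosSemidef)
    (P : ℕ → Matrix (Fin n) (Fin n) ℝ)
    (Υ : ℕ → Matrix (Fin m) (Fin m) ℝ)
    (M : ℕ → Matrix (Fin m) (Fin n) ℝ)
    (hPterm : (P (N + 1)).PosSemidef)
    (hΥ : ∀ k ≤ N, Υ k = Bᵀ * (R + P (k + 1)) * B)
    (hM : ∀ k ≤ N, M k = Bᵀ * P (k + 1) * A)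
    (hP : ∀ k ≤ N, P k = Q + Aᵀ * P (k + 1) * A - (M k)ᵀ * (Υ k)⁻¹ * M k)
    (hΥpos : ∀ k ≤ N, (Υ k).PosDef)
    (d : ℕ → Fin m → ℝ)
    (f : ℕ → Fin n → ℝ) (h : ℕ → Fin m → ℝ)
    (hfterm : f (N + 1) = -(P (N + 1) *ᵥ r))
    (hh : ∀ k ≤ N, h k = (Bᵀ * (R + P (k + 1)) * E) *ᵥ d k + Bᵀ *ᵥ f (k + 1))
    (hf : ∀ k ≤ N, f k = (Aᵀ * P (k + 1) * E) *ᵥ d k + Aᵀ *ᵥ f (k + 1)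
            - (M k)ᵀ *ᵥ ((Υ k)⁻¹ *ᵥ h k) - Q *ᵥ r)
    (x : ℕ → Fin n → ℝ) (u : ℕ → Fin m → ℝ)
    (hx : ∀ k ≤ N, x (k + 1) = A *ᵥ x k + B *ᵥ u k + E *ᵥ d k) :
    (∑ k ∈ range (N + 1),
        ((x k - r) ⬝ᵥ (Q *ᵥ (x k - r))
          + (B *ᵥ u k + E *ᵥ d k) ⬝ᵥ (R *ᵥ (B *ᵥ u k + E *ᵥ d k))))
      + (x (N + 1) - r) ⬝ᵥ (P (N + 1) *ᵥ (x (N + 1) - r))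
    = x 0 ⬝ᵥ (P 0 *ᵥ x 0) + 2 * (x 0 ⬝ᵥ f 0) + r ⬝ᵥ (P (N + 1) *ᵥ r)
      + ∑ k ∈ range (N + 1),
          (r ⬝ᵥ (Q *ᵥ r)
            + (E *ᵥ d k) ⬝ᵥ (R *ᵥ (E *ᵥ d k))
            - h k ⬝ᵥ ((Υ k)⁻¹ *ᵥ h k)
            + (E *ᵥ d k) ⬝ᵥ (P (k + 1) *ᵥ (E *ᵥ d k))
            + 2 * ((E *ᵥ d k) ⬝ᵥ f (k + 1))
            + (u k + (Υ k)⁻¹ *ᵥ (M k *ᵥ x k) + (Υ k)⁻¹ *ᵥ h k) ⬝ᵥ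
                (Υ k *ᵥ (u k + (Υ k)⁻¹ *ᵥ (M k *ᵥ x k) + (Υ k)⁻¹ *ᵥ h k))) :=
  completion_of_squares_identity_general N
    (fun _ _ => isHermitian_iff_isSymm.mp hQ.isHermitian)
    (fun _ _ => isHermitian_iff_isSymm.mp hR.isHermitian)
    (isHermitian_iff_isSymm.mp hPterm.isHermitian)
    hΥ hM hP (fun k hk => (hΥpos k hk).det_pos.ne'.isUnit) hfterm hh hf hx
end

section
/- Suppose Υ_k is positive definite for every k ∈ {0,…,N}. Then for every initial state x_0 and every disturbance sequence (d_k), the cost J_N is minimized over all control sequences by the unique controller u_k = −Υ_k^{-1}M_k x_k − Υ_k^{-1}h_k (with x_k the resulting closed-loop state), and the optimal cost equals J_N^* = x_0'P_0 x_0 + 2 x_0'f_0 + r'P_{N+1} r + Σ_{k=0}^N [ r'Q r + d_k'E'(R + P_{k+1})E d_k + 2 d_k'E'f_{k+1} − h_k'Υ_k^{-1}h_k ]. -/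
open Matrix Finset

/-!
Dynamic programming with the quadratic value functions `V_k(x) = x'P_k x + 2 x'f_k`. Along any
trajectory, the stage cost plus `V_{k+1}(x_{k+1})` is a quadratic function of `u_k` with Hessian
`Υ_k` and linear term `M_k x_k + h_k`; completing the square leaves `V_k(x_k)`, a constant, and the
`Υ_k`-square of the deviation of `u_k` from the feedback law. Telescoping exhibits the total cost
as a constant plus the sum of these squares, which vanishes exactly on the closed loop.
-/

section QuadraticValue

variable {α ι κ : Type*} [CommRing α] [Fintype ι] [Fintype κ]

/-- The inhomogeneous quadratic function `x'Px + 2 x'f`, the shape of all value functions here. -/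
def quadraticValue (P : Matrix ι ι α) (f x : ι → α) : α :=
  x ⬝ᵥ (P *ᵥ x) + 2 * (x ⬝ᵥ f)

theorem dotProduct_mulVec_comm_of_isSymm {P : Matrix ι ι α} (hP : P.IsSymm) (x y : ι → α) :
    x ⬝ᵥ (P *ᵥ y) = y ⬝ᵥ (P *ᵥ x) := by
  rw [← dotProduct_transpose_mulVec, hP.eq]

theorem quadraticValue_zero (P : Matrix ι ι α) (x : ι → α) :
    quadraticValue P 0 x = x ⬝ᵥ (P *ᵥ x) := by
  simp [quadraticValue]

theorem quadraticValue_add_left (P P' : Matrix ι ι α) (f f' x : ι → α) :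
    quadraticValue (P + P') (f + f') x = quadraticValue P f x + quadraticValue P' f' x := by
  simp only [quadraticValue, add_mulVec, dotProduct_add]
  ring

theorem quadraticValue_sub_left (P P' : Matrix ι ι α) (f f' x : ι → α) :
    quadraticValue (P - P') (f - f') x = quadraticValue P f x - quadraticValue P' f' x := by
  simp only [quadraticValue, sub_mulVec, dotProduct_sub]
  ring

theorem quadraticValue_add {P : Matrix ι ι α} (hP : P.IsSymm) (f x y : ι → α) :
    quadraticValue P f (x + y) = quadraticValue P f x + quadraticValue P (P *ᵥ x + f) y := by
  simp only [quadraticValue, mulVec_add, dotProduct_add, add_dotProduct]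
  linear_combination dotProduct_mulVec_comm_of_isSymm hP x y

theorem quadraticValue_mulVec (P : Matrix ι ι α) (f : ι → α) (B : Matrix ι κ α) (u : κ → α) :
    quadraticValue P f (B *ᵥ u) = quadraticValue (Bᵀ * P * B) (Bᵀ *ᵥ f) u := by
  simp only [quadraticValue, ← mulVec_mulVec, dotProduct_transpose_mulVec, dotProduct_comm]

theorem sub_dotProduct_mulVec_sub {P : Matrix ι ι α} (hP : P.IsSymm) (x r : ι → α) :
    (x - r) ⬝ᵥ (P *ᵥ (x - r)) = quadraticValue P (-(P *ᵥ r)) x + r ⬝ᵥ (P *ᵥ r) := by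
  simp only [quadraticValue, mulVec_sub, dotProduct_sub, sub_dotProduct, dotProduct_neg]
  linear_combination -dotProduct_mulVec_comm_of_isSymm hP r x

theorem quadraticValue_eq_sq_sub [DecidableEq ι] {P : Matrix ι ι α} (hP : P.IsSymm)
    (hunit : IsUnit P) (f x : ι → α) :
    quadraticValue P f x = (x + P⁻¹ *ᵥ f) ⬝ᵥ (P *ᵥ (x + P⁻¹ *ᵥ f)) - f ⬝ᵥ (P⁻¹ *ᵥ f) := by
  have hcancel : P *ᵥ (P⁻¹ *ᵥ f) = f := by
    rw [mulVec_mulVec, mul_nonsing_inv P ((isUnit_iff_isUnit_det P).1 hunit), one_mulVec]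
  rw [← quadraticValue_zero P, add_comm x, quadraticValue_add hP, quadraticValue_zero,
    hcancel, add_zero, dotProduct_comm f]
  ring

end QuadraticValue

/-- One stage of a tracking problem: the affine dynamics `x ↦ A x + B u + w` together with the
symmetric weights `Q`, `R` and the reference `r` of the stage cost. The disturbance `E d` of the
informal statement enters only through the vector `w = E d`. -/
structure TrackingStage (α ι κ : Type*) where
  A : Matrix ι ι α
  B : Matrix ι κ α
  Q : Matrix ι ι α
  R : Matrix ι ι α
  r : ι → α
  w : ι → α
  Q_isSymm : Q.IsSymm
  R_isSymm : R.IsSymm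

namespace TrackingStage

variable {α ι κ : Type*} [CommRing α] [Fintype ι] [Fintype κ]

/-- The state reached from `x` under the control `u`. -/
def next (s : TrackingStage α ι κ) (x : ι → α) (u : κ → α) : ι → α :=
  s.A *ᵥ x + s.B *ᵥ u + s.w

/-- The running cost: the `Q`-weighted tracking error plus the `R`-weighted total input `B u + w`
(rather than a weight on the control `u` alone). -/
def cost (s : TrackingStage α ι κ) (x : ι → α) (u : κ → α) : α :=
  (x - s.r) ⬝ᵥ (s.Q *ᵥ (x - s.r)) + (s.B *ᵥ u + s.w) ⬝ᵥ (s.R *ᵥ (s.B *ᵥ u + s.w))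

/-- The trajectories of a sequence of stages up to time `N + 1`. -/
def IsTrajectory (s : ℕ → TrackingStage α ι κ) (N : ℕ) (x : ℕ → ι → α) (u : ℕ → κ → α) : Prop :=
  ∀ k ≤ N, x (k + 1) = (s k).next (x k) (u k)

/-- The cost over the stages `0, …, N` with terminal weight `P` and terminal reference `r`. -/
def totalCost (s : ℕ → TrackingStage α ι κ) (N : ℕ) (P : Matrix ι ι α) (r : ι → α)
    (x : ℕ → ι → α) (u : ℕ → κ → α) : α :=
  ∑ k ∈ range (N + 1), (s k).cost (x k) (u k) + (x (N + 1) - r) ⬝ᵥ (P *ᵥ (x (N + 1) - r))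

variable [DecidableEq κ]

/-- One step of the backward recursion, from the data `P'`, `f'` at time `k + 1` to the
data `P`, `f` at time `k`, through the intermediate quantities `Υ`, `M`, `h`. -/
structure BackwardStep (s : TrackingStage α ι κ) (P' : Matrix ι ι α) (f' : ι → α)
    (Υ : Matrix κ κ α) (M : Matrix κ ι α) (h : κ → α) (P : Matrix ι ι α) (f : ι → α) : Prop where
  Υ_eq : Υ = s.Bᵀ * (s.R + P') * s.B
  M_eq : M = s.Bᵀ * P' * s.A
  h_eq : h = (s.Bᵀ * (s.R + P')) *ᵥ s.w + s.Bᵀ *ᵥ f'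
  P_eq : P = s.Q + s.Aᵀ * P' * s.A - Mᵀ * Υ⁻¹ * M
  f_eq : f = (s.Aᵀ * P') *ᵥ s.w + s.Aᵀ *ᵥ f' - Mᵀ *ᵥ (Υ⁻¹ *ᵥ h) - s.Q *ᵥ s.r

/-- The affine state feedback defined by a backward step, `-Υ⁻¹ (M x + h)` in expanded form. -/
noncomputable def feedback (Υ : Matrix κ κ α) (M : Matrix κ ι α) (h : κ → α) (x : ι → α) :
    κ → α :=
  -(Υ⁻¹ *ᵥ (M *ᵥ x)) - Υ⁻¹ *ᵥ h

/-- The state-independent part of the cost-to-go contributed by one stage. -/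
noncomputable def offset (s : TrackingStage α ι κ) (P' : Matrix ι ι α) (f' : ι → α)
    (Υ : Matrix κ κ α) (h : κ → α) : α :=
  s.r ⬝ᵥ (s.Q *ᵥ s.r) + s.w ⬝ᵥ ((s.R + P') *ᵥ s.w) + 2 * (s.w ⬝ᵥ f') - h ⬝ᵥ (Υ⁻¹ *ᵥ h)

namespace BackwardStep

variable {s : TrackingStage α ι κ} {P' P : Matrix ι ι α} {f' f : ι → α} {Υ : Matrix κ κ α}
  {M : Matrix κ ι α} {h : κ → α}

theorem isSymm_Υ (hs : s.BackwardStep P' f' Υ M h P f) (hP' : P'.IsSymm) : Υ.IsSymm := by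
  simp only [IsSymm, hs.Υ_eq, transpose_mul, transpose_transpose, (s.R_isSymm.add hP').eq,
    Matrix.mul_assoc]

theorem isSymm_P (hs : s.BackwardStep P' f' Υ M h P f) (hP' : P'.IsSymm) : P.IsSymm := by
  simp only [IsSymm, hs.P_eq, transpose_sub, transpose_add, transpose_mul, transpose_transpose,
    s.Q_isSymm.eq, hP'.eq, (hs.isSymm_Υ hP').inv.eq, Matrix.mul_assoc]

theorem cost_add_quadraticValue_next (hs : s.BackwardStep P' f' Υ M h P f) (hP' : P'.IsSymm)
    (x : ι → α) (u : κ → α) :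
    s.cost x u + quadraticValue P' f' (s.next x u)
      = s.cost x 0 + quadraticValue P' f' (s.next x 0) + quadraticValue Υ (M *ᵥ x + h) u := by
  have hlin : M *ᵥ x + h = s.Bᵀ *ᵥ (s.R *ᵥ s.w + (P' *ᵥ (s.A *ᵥ x + s.w) + f')) := by
    rw [hs.M_eq, hs.h_eq]
    simp only [← mulVec_mulVec, mulVec_add, add_mulVec]
    abel
  have hnext : s.next x u = s.A *ᵥ x + s.w + s.B *ᵥ u := add_right_comm _ _ _
  have hnext_zero : s.next x 0 = s.A *ᵥ x + s.w := by simp [next]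
  rw [hlin, hs.Υ_eq, ← quadraticValue_mulVec, quadraticValue_add_left, hnext, hnext_zero,
    quadraticValue_add hP', cost, cost, mulVec_zero, zero_add, add_comm (s.B *ᵥ u),
    ← quadraticValue_zero s.R (s.w + _), quadraticValue_add s.R_isSymm,
    quadraticValue_zero, add_zero]
  ring

theorem cost_zero_add_quadraticValue_next_zero (hs : s.BackwardStep P' f' Υ M h P f)
    (hP' : P'.IsSymm) (x : ι → α) :
    s.cost x 0 + quadraticValue P' f' (s.next x 0)
      = quadraticValue P f x + s.offset P' f' Υ h + (M *ᵥ x + h) ⬝ᵥ (Υ⁻¹ *ᵥ (M *ᵥ x + h)) := by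
  have hfree : quadraticValue P' f' (s.next x 0) = quadraticValue P' f' s.w
      + quadraticValue (s.Aᵀ * P' * s.A) ((s.Aᵀ * P') *ᵥ s.w + s.Aᵀ *ᵥ f') x := by
    rw [next, mulVec_zero, add_zero, add_comm, quadraticValue_add hP', quadraticValue_mulVec,
      mulVec_add, mulVec_mulVec]
  have hcorrection : (M *ᵥ x + h) ⬝ᵥ (Υ⁻¹ *ᵥ (M *ᵥ x + h)) = h ⬝ᵥ (Υ⁻¹ *ᵥ h)
      + quadraticValue (Mᵀ * Υ⁻¹ * M) (Mᵀ *ᵥ (Υ⁻¹ *ᵥ h)) x := by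
    rw [← quadraticValue_zero, add_comm, quadraticValue_add (hs.isSymm_Υ hP').inv,
      quadraticValue_zero, quadraticValue_mulVec, add_zero]
  have hvalue : quadraticValue P f x = quadraticValue s.Q (-(s.Q *ᵥ s.r)) x
      + quadraticValue (s.Aᵀ * P' * s.A) ((s.Aᵀ * P') *ᵥ s.w + s.Aᵀ *ᵥ f') x
      - quadraticValue (Mᵀ * Υ⁻¹ * M) (Mᵀ *ᵥ (Υ⁻¹ *ᵥ h)) x := by
    rw [← quadraticValue_add_left, ← quadraticValue_sub_left, hs.P_eq, hs.f_eq]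
    congr 1
    abel
  rw [hfree, hcorrection, hvalue, cost, sub_dotProduct_mulVec_sub s.Q_isSymm, offset,
    mulVec_zero, zero_add, add_mulVec, dotProduct_add]
  simp only [quadraticValue]
  ring

theorem cost_add_quadraticValue_next_eq_add_sq (hs : s.BackwardStep P' f' Υ M h P f)
    (hP' : P'.IsSymm) (hΥ : IsUnit Υ) (x : ι → α) (u : κ → α) :
    s.cost x u + quadraticValue P' f' (s.next x u)
      = quadraticValue P f x + s.offset P' f' Υ h
        + (u - feedback Υ M h x) ⬝ᵥ (Υ *ᵥ (u - feedback Υ M h x)) := by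
  have hdev : u - feedback Υ M h x = u + Υ⁻¹ *ᵥ (M *ᵥ x + h) := by
    rw [feedback, mulVec_add]
    abel
  rw [hs.cost_add_quadraticValue_next hP', hs.cost_zero_add_quadraticValue_next_zero hP',
    quadraticValue_eq_sq_sub (hs.isSymm_Υ hP') hΥ, hdev]
  ring

end BackwardStep

variable {s : ℕ → TrackingStage α ι κ} {N : ℕ} {P : ℕ → Matrix ι ι α} {f : ℕ → ι → α}
  {Υ : ℕ → Matrix κ κ α} {M : ℕ → Matrix κ ι α} {h : ℕ → κ → α}

theorem isSymm_of_backwardStep (hterm : (P (N + 1)).IsSymm)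
    (hstep : ∀ k ≤ N, (s k).BackwardStep (P (k + 1)) (f (k + 1)) (Υ k) (M k) (h k) (P k) (f k))
    {k : ℕ} (hk : k ≤ N + 1) : (P k).IsSymm := by
  induction hk using Nat.decreasingInduction with
  | self => exact hterm
  | of_succ k hk ih => exact (hstep k (Nat.lt_succ_iff.1 hk)).isSymm_P ih

theorem totalCost_eq_add_sum_sq (hterm : (P (N + 1)).IsSymm) {r : ι → α}
    (hfterm : f (N + 1) = -(P (N + 1) *ᵥ r))
    (hstep : ∀ k ≤ N, (s k).BackwardStep (P (k + 1)) (f (k + 1)) (Υ k) (M k) (h k) (P k) (f k))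
    (hΥ : ∀ k ≤ N, IsUnit (Υ k)) {x : ℕ → ι → α} {u : ℕ → κ → α} (hx : IsTrajectory s N x u) :
    totalCost s N (P (N + 1)) r x u
      = quadraticValue (P 0) (f 0) (x 0) + r ⬝ᵥ (P (N + 1) *ᵥ r)
        + ∑ k ∈ range (N + 1), (s k).offset (P (k + 1)) (f (k + 1)) (Υ k) (h k)
        + ∑ k ∈ range (N + 1), (u k - feedback (Υ k) (M k) (h k) (x k)) ⬝ᵥ
            (Υ k *ᵥ (u k - feedback (Υ k) (M k) (h k) (x k))) := by
  let V (k : ℕ) : α := quadraticValue (P k) (f k) (x k)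
  have hbellman : ∀ k ∈ range (N + 1), (s k).cost (x k) (u k)
      = (s k).offset (P (k + 1)) (f (k + 1)) (Υ k) (h k)
        + (u k - feedback (Υ k) (M k) (h k) (x k)) ⬝ᵥ
            (Υ k *ᵥ (u k - feedback (Υ k) (M k) (h k) (x k)))
        - (V (k + 1) - V k) := fun k hk ↦ by
    have hkN : k ≤ N := mem_range_succ_iff.1 hk
    have hP : (P (k + 1)).IsSymm := isSymm_of_backwardStep hterm hstep (by lia)
    have heq := (hstep k hkN).cost_add_quadraticValue_next_eq_add_sq hP (hΥ k hkN) (x k) (u k)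
    rw [← hx k hkN] at heq
    linear_combination heq
  rw [totalCost, sum_congr rfl hbellman, sum_sub_distrib, sum_add_distrib, sum_range_sub V,
    sub_dotProduct_mulVec_sub hterm, ← hfterm]
  ring

theorem totalCost_eq_of_feedback (hterm : (P (N + 1)).IsSymm) {r : ι → α}
    (hfterm : f (N + 1) = -(P (N + 1) *ᵥ r))
    (hstep : ∀ k ≤ N, (s k).BackwardStep (P (k + 1)) (f (k + 1)) (Υ k) (M k) (h k) (P k) (f k))
    (hΥ : ∀ k ≤ N, IsUnit (Υ k)) {x : ℕ → ι → α} {u : ℕ → κ → α} (hx : IsTrajectory s N x u)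
    (hu : ∀ k ≤ N, u k = feedback (Υ k) (M k) (h k) (x k)) :
    totalCost s N (P (N + 1)) r x u
      = quadraticValue (P 0) (f 0) (x 0) + r ⬝ᵥ (P (N + 1) *ᵥ r)
        + ∑ k ∈ range (N + 1), (s k).offset (P (k + 1)) (f (k + 1)) (Υ k) (h k) := by
  rw [totalCost_eq_add_sum_sq hterm hfterm hstep hΥ hx, add_eq_left]
  refine sum_eq_zero fun k hk ↦ ?_
  rw [hu k (mem_range_succ_iff.1 hk), sub_self, zero_dotProduct]

end TrackingStage

open TrackingStage in
theorem finite_horizon_optimal_controller_general {ι κ : Type*} [Fintype ι] [Fintype κ]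
    [DecidableEq κ] {s : ℕ → TrackingStage ℝ ι κ} {N : ℕ} {P : ℕ → Matrix ι ι ℝ}
    {f : ℕ → ι → ℝ} {Υ : ℕ → Matrix κ κ ℝ} {M : ℕ → Matrix κ ι ℝ} {h : ℕ → κ → ℝ} {r : ι → ℝ}
    (hterm : (P (N + 1)).IsSymm) (hfterm : f (N + 1) = -(P (N + 1) *ᵥ r))
    (hstep : ∀ k ≤ N, (s k).BackwardStep (P (k + 1)) (f (k + 1)) (Υ k) (M k) (h k) (P k) (f k))
    (hΥ : ∀ k ≤ N, (Υ k).PosDef) {xs : ℕ → ι → ℝ} {us : ℕ → κ → ℝ}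
    (hus : ∀ k ≤ N, us k = feedback (Υ k) (M k) (h k) (xs k)) (hxs : IsTrajectory s N xs us) :
    totalCost s N (P (N + 1)) r xs us
        = quadraticValue (P 0) (f 0) (xs 0) + r ⬝ᵥ (P (N + 1) *ᵥ r)
          + ∑ k ∈ range (N + 1), (s k).offset (P (k + 1)) (f (k + 1)) (Υ k) (h k)
      ∧ (∀ x u, x 0 = xs 0 → IsTrajectory s N x u →
          totalCost s N (P (N + 1)) r xs us ≤ totalCost s N (P (N + 1)) r x u)
      ∧ (∀ x u, x 0 = xs 0 → IsTrajectory s N x u →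
          totalCost s N (P (N + 1)) r x u = totalCost s N (P (N + 1)) r xs us →
          ∀ k ≤ N, u k = feedback (Υ k) (M k) (h k) (x k)) := by
  have hunit : ∀ k ≤ N, IsUnit (Υ k) := fun k hk ↦ (hΥ k hk).isUnit
  have hopt := totalCost_eq_of_feedback hterm hfterm hstep hunit hxs hus
  have hnonneg (x : ℕ → ι → ℝ) (u : ℕ → κ → ℝ) : ∀ k ∈ range (N + 1),
      0 ≤ (u k - feedback (Υ k) (M k) (h k) (x k)) ⬝ᵥ
        (Υ k *ᵥ (u k - feedback (Υ k) (M k) (h k) (x k))) := fun k hk ↦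
    (hΥ k (mem_range_succ_iff.1 hk)).posSemidef.dotProduct_mulVec_nonneg _
  refine ⟨hopt, fun x u hx0 hx ↦ ?_, fun x u hx0 hx heq k hk ↦ ?_⟩
  · rw [hopt, totalCost_eq_add_sum_sq hterm hfterm hstep hunit hx, hx0]
    exact le_add_of_nonneg_right (sum_nonneg (hnonneg x u))
  · rw [hopt, totalCost_eq_add_sum_sq hterm hfterm hstep hunit hx, hx0, add_eq_left,
      sum_eq_zero_iff_of_nonneg (hnonneg x u)] at heq
    by_contra hne
    exact ((hΥ k hk).dotProduct_mulVec_pos (sub_ne_zero.2 hne)).ne'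
      (heq k (mem_range_succ_iff.2 hk))

/-- **Finite-horizon optimal disturbance rejection controller (sufficiency).**
If `Υ k > 0` for all `k ∈ {0,…,N}`, then for every initial state `x0` and every
disturbance sequence `d`, the cost `J_N` is minimized over all control sequences by the
unique controller `u_k = −Υ_k⁻¹ M_k x_k − Υ_k⁻¹ h_k`, and the optimal cost equals the
stated expression. -/
theorem finite_horizon_optimal_controller
    (n m N : ℕ)
    (A Q R : Matrix (Fin n) (Fin n) ℝ)
    (B E : Matrix (Fin n) (Fin m) ℝ)
    (r : Fin n → ℝ)
    (hQ : Q.PosSemidef) (hR : R.PosSemidef)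
    (P : ℕ → Matrix (Fin n) (Fin n) ℝ)
    (Υ : ℕ → Matrix (Fin m) (Fin m) ℝ)
    (M : ℕ → Matrix (Fin m) (Fin n) ℝ)
    (hPterm : (P (N + 1)).PosSemidef)
    (hΥ : ∀ k ≤ N, Υ k = Bᵀ * (R + P (k + 1)) * B)
    (hM : ∀ k ≤ N, M k = Bᵀ * P (k + 1) * A)
    (hP : ∀ k ≤ N, P k = Q + Aᵀ * P (k + 1) * A - (M k)ᵀ * (Υ k)⁻¹ * M k)
    (hΥpos : ∀ k ≤ N, (Υ k).PosDef)
    (d : ℕ → Fin m → ℝ)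
    (f : ℕ → Fin n → ℝ) (h : ℕ → Fin m → ℝ)
    (hfterm : f (N + 1) = -(P (N + 1) *ᵥ r))
    (hh : ∀ k ≤ N, h k = (Bᵀ * (R + P (k + 1)) * E) *ᵥ d k + Bᵀ *ᵥ f (k + 1))
    (hf : ∀ k ≤ N, f k = (Aᵀ * P (k + 1) * E) *ᵥ d k + Aᵀ *ᵥ f (k + 1)
            - (M k)ᵀ *ᵥ ((Υ k)⁻¹ *ᵥ h k) - Q *ᵥ r)
    -- the cost functional `J_N` of a trajectory/control pair
    (J : (ℕ → Fin n → ℝ) → (ℕ → Fin m → ℝ) → ℝ)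
    (hJ : ∀ x u, J x u =
        (∑ k ∈ range (N + 1),
          ((x k - r) ⬝ᵥ (Q *ᵥ (x k - r))
            + (B *ᵥ u k + E *ᵥ d k) ⬝ᵥ (R *ᵥ (B *ᵥ u k + E *ᵥ d k))))
        + (x (N + 1) - r) ⬝ᵥ (P (N + 1) *ᵥ (x (N + 1) - r)))
    -- initial state and the closed-loop optimal trajectory
    (x0 : Fin n → ℝ)
    (xs : ℕ → Fin n → ℝ) (us : ℕ → Fin m → ℝ)
    (hxs0 : xs 0 = x0)
    (hus : ∀ k ≤ N, us k = -((Υ k)⁻¹ *ᵥ (M k *ᵥ xs k)) - (Υ k)⁻¹ *ᵥ h k)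
    (hxs : ∀ k ≤ N, xs (k + 1) = A *ᵥ xs k + B *ᵥ us k + E *ᵥ d k) :
    J xs us
      = x0 ⬝ᵥ (P 0 *ᵥ x0) + 2 * (x0 ⬝ᵥ f 0) + r ⬝ᵥ (P (N + 1) *ᵥ r)
        + ∑ k ∈ range (N + 1),
            (r ⬝ᵥ (Q *ᵥ r)
              + (E *ᵥ d k) ⬝ᵥ ((R + P (k + 1)) *ᵥ (E *ᵥ d k))
              + 2 * ((E *ᵥ d k) ⬝ᵥ f (k + 1))
              - h k ⬝ᵥ ((Υ k)⁻¹ *ᵥ h k))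
    ∧ (∀ (x : ℕ → Fin n → ℝ) (u : ℕ → Fin m → ℝ),
        x 0 = x0 → (∀ k ≤ N, x (k + 1) = A *ᵥ x k + B *ᵥ u k + E *ᵥ d k) →
        J xs us ≤ J x u)
    ∧ (∀ (x : ℕ → Fin n → ℝ) (u : ℕ → Fin m → ℝ),
        x 0 = x0 → (∀ k ≤ N, x (k + 1) = A *ᵥ x k + B *ᵥ u k + E *ᵥ d k) →
        J x u = J xs us →
        ∀ k ≤ N, u k = -((Υ k)⁻¹ *ᵥ (M k *ᵥ x k)) - (Υ k)⁻¹ *ᵥ h k) := by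
  obtain rfl := hxs0
  obtain rfl := funext₂ hJ
  exact finite_horizon_optimal_controller_general
    (s := fun k ↦ ⟨A, B, Q, R, r, E *ᵥ d k, isHermitian_iff_isSymm.1 hQ.isHermitian,
      isHermitian_iff_isSymm.1 hR.isHermitian⟩)
    (isHermitian_iff_isSymm.1 hPterm.isHermitian) hfterm
    (fun k hk ↦ ⟨hΥ k hk, hM k hk, by simpa only [mulVec_mulVec] using hh k hk, hP k hk,
      by simpa only [mulVec_mulVec] using hf k hk⟩)
    hΥpos hus hxs
end

section
/- Suppose Υ_k is positive definite for every k ∈ {0,…,N}. Let n ∈ {0,…,N−1} and suppose that for every k ∈ {n+1,…,N} the control is given by u_k = −Υ_k^{-1}M_k x_k − Υ_k^{-1}h_k. Then the cost-to-go satisfies J̄_{n+1} := Σ_{k=n+1}^N [(x_k − r)'Q(x_k − r) + (B u_k + E d_k)'R(B u_k + E d_k)] + (x_{N+1} − r)'P_{N+1}(x_{N+1} − r) = x_{n+1}'P_{n+1} x_{n+1} + 2 x_{n+1}'f_{n+1} + r'P_{N+1} r + Σ_{k=n+1}^N [ r'Q r + d_k'E'(R + P_{k+1})E d_k + 2 d_k'E'f_{k+1}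 − h_k'Υ_k^{-1}h_k ]. -/
open Matrix Finset

/-!
Dynamic programming with the value function `V_k(x) = x' P_k x + 2 x' f_k`. Along the dynamics, the
input cost plus `V_{k+1}(x_{k+1})` is a quadratic polynomial in `u_k` with quadratic part `Υ_k` and
linear part `M_k x_k + h_k`. Completing the square exhibits the feedback law as its stationary
point, and the remainder `-(M_k x_k + h_k)' Υ_k⁻¹ (M_k x_k + h_k)` is what the recursions for `P_k`
and `f_k` absorb, up to `-h_k' Υ_k⁻¹ h_k`. Summing the stage identities telescopes, and deviating by
`v_k` from the feedback only adds `v_k' Υ_k v_k`.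
-/

section CommSemiring

variable {ι κ α : Type*} [Fintype ι] [CommSemiring α]

theorem isSymm_transpose_mul_mul_s3 {S : Matrix ι ι α} (hS : S.IsSymm) (B : Matrix ι κ α) :
    (Bᵀ * S * B).IsSymm := by
  rw [IsSymm, transpose_mul, transpose_mul, transpose_transpose, hS.eq, Matrix.mul_assoc]

theorem dotProduct_mulVec_comm_of_isSymm_s3 {S : Matrix ι ι α} (hS : S.IsSymm) (v w : ι → α) :
    v ⬝ᵥ S *ᵥ w = w ⬝ᵥ S *ᵥ v := by
  simpa only [hS.eq] using dotProduct_transpose_mulVec S v w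

/-- The quadratic polynomial `v' S v + 2 v' b` in `v`. The value function of the control problem is
`quadLin (P k) (f k)`; the factor `2` makes `S v + b` half of its gradient when `S` is symmetric. -/
def quadLin (S : Matrix ι ι α) (b v : ι → α) : α :=
  v ⬝ᵥ S *ᵥ v + 2 * (v ⬝ᵥ b)

theorem quadLin_zero_right (S : Matrix ι ι α) (v : ι → α) : quadLin S 0 v = v ⬝ᵥ S *ᵥ v := by
  simp [quadLin]

theorem quadLin_add_add (S T : Matrix ι ι α) (b c v : ι → α) :
    quadLin (S + T) (b + c) v = quadLin S b v + quadLin T c v := by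
  simp only [quadLin, add_mulVec, dotProduct_add]
  ring

theorem quadLin_add {S : Matrix ι ι α} (hS : S.IsSymm) (b v w : ι → α) :
    quadLin S b (v + w) = quadLin S (S *ᵥ w + b) v + quadLin S b w := by
  simp only [quadLin, mulVec_add, add_dotProduct, dotProduct_add,
    dotProduct_mulVec_comm_of_isSymm_s3 hS w v]
  ring

variable [Fintype κ]

theorem quadLin_mulVec (S : Matrix ι ι α) (b : ι → α) (B : Matrix ι κ α) (v : κ → α) :
    quadLin S b (B *ᵥ v) = quadLin (Bᵀ * S * B) (Bᵀ *ᵥ b) v := by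
  simp only [quadLin, ← mulVec_mulVec, dotProduct_transpose_mulVec, dotProduct_comm (B *ᵥ v)]

theorem dotProduct_mulVec_mulVec_add {S : Matrix κ κ α} (hS : S.IsSymm) (M : Matrix κ ι α)
    (x : ι → α) (h : κ → α) :
    (M *ᵥ x + h) ⬝ᵥ S *ᵥ (M *ᵥ x + h) =
      quadLin (Mᵀ * S * M) (Mᵀ *ᵥ (S *ᵥ h)) x + h ⬝ᵥ S *ᵥ h := by
  have expansion := quadLin_add hS 0 (M *ᵥ x) h
  rwa [quadLin_zero_right, quadLin_zero_right, add_zero, quadLin_mulVec] at expansion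

theorem inputCost_add_quadLin_next {R p : Matrix ι ι α} (hR : R.IsSymm) (hp : p.IsSymm)
    (A : Matrix ι ι α) (B : Matrix ι κ α) (g x w : ι → α) (u : κ → α) :
    (B *ᵥ u + w) ⬝ᵥ R *ᵥ (B *ᵥ u + w) + quadLin p g (A *ᵥ x + B *ᵥ u + w) =
      quadLin (Bᵀ * (R + p) * B) ((Bᵀ * p * A) *ᵥ x + Bᵀ *ᵥ ((R + p) *ᵥ w + g)) u
        + quadLin (Aᵀ * p * A) (Aᵀ *ᵥ (p *ᵥ w + g)) x
        + (w ⬝ᵥ (R + p) *ᵥ w + 2 * (w ⬝ᵥ g)) := by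
  have next_value : quadLin p g (A *ᵥ x + B *ᵥ u + w) =
      quadLin p (p *ᵥ (A *ᵥ x) + g) (B *ᵥ u + w) + quadLin p g (A *ᵥ x) := by
    rw [← quadLin_add hp, add_comm (B *ᵥ u + w), ← add_assoc]
  have input_terms : (B *ᵥ u + w) ⬝ᵥ R *ᵥ (B *ᵥ u + w)
        + quadLin p (p *ᵥ (A *ᵥ x) + g) (B *ᵥ u + w) =
      quadLin (Bᵀ * (R + p) * B) ((Bᵀ * p * A) *ᵥ x + Bᵀ *ᵥ ((R + p) *ᵥ w + g)) u
        + quadLin (R + p) (p *ᵥ (A *ᵥ x) + g) w := by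
    rw [← quadLin_zero_right, ← quadLin_add_add, zero_add, quadLin_add (hR.add hp), quadLin_mulVec,
      add_left_comm, mulVec_add Bᵀ]
    simp only [mulVec_mulVec, Matrix.mul_assoc]
  have cross_term : w ⬝ᵥ p *ᵥ (A *ᵥ x) = x ⬝ᵥ Aᵀ *ᵥ (p *ᵥ w) := by
    rw [dotProduct_mulVec_comm_of_isSymm_s3 hp, dotProduct_transpose_mulVec, dotProduct_comm]
  rw [next_value, ← add_assoc, input_terms, quadLin_mulVec p]
  simp only [quadLin, dotProduct_add, mulVec_add, cross_term]
  ring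

end CommSemiring

section CommRing

variable {ι κ δ α : Type*} [Fintype ι] [Fintype κ] [DecidableEq κ] [Fintype δ] [CommRing α]

theorem isSymm_nonsing_inv {S : Matrix κ κ α} (hS : S.IsSymm) : S⁻¹.IsSymm := by
  rw [IsSymm, transpose_nonsing_inv, hS.eq]

theorem dotProduct_mulVec_sub_eq_quadLin {S : Matrix ι ι α} (hS : S.IsSymm) (v r : ι → α) :
    (v - r) ⬝ᵥ S *ᵥ (v - r) = quadLin S (-(S *ᵥ r)) v + r ⬝ᵥ S *ᵥ r := by
  have expansion := quadLin_add hS 0 v (-r)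
  simpa only [quadLin_zero_right, ← sub_eq_add_neg, add_zero, mulVec_neg, neg_dotProduct_neg]
    using expansion

theorem quadLin_sub_sub (S T : Matrix ι ι α) (b c v : ι → α) :
    quadLin (S - T) (b - c) v = quadLin S b v - quadLin T c v := by
  simp only [quadLin, sub_mulVec, dotProduct_sub]
  ring

theorem quadLin_sub_nonsing_inv_mulVec {S : Matrix κ κ α} (hS : S.IsSymm) (hdet : IsUnit S.det)
    (b v : κ → α) :
    quadLin S b (v - S⁻¹ *ᵥ b) = v ⬝ᵥ S *ᵥ v - b ⬝ᵥ S⁻¹ *ᵥ b := by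
  have cancel : S *ᵥ (S⁻¹ *ᵥ b) = b := by
    rw [mulVec_mulVec, mul_nonsing_inv S hdet, one_mulVec]
  rw [sub_eq_add_neg, quadLin_add hS, mulVec_neg, cancel, neg_add_cancel, quadLin_zero_right]
  simp only [quadLin, mulVec_neg, cancel, neg_dotProduct, dotProduct_neg,
    dotProduct_comm (S⁻¹ *ᵥ b)]
  ring

theorem stageCost_add_quadLin_next {A Q R p P : Matrix ι ι α} {B : Matrix ι κ α}
    {E : Matrix ι δ α} {Υ : Matrix κ κ α} {M : Matrix κ ι α}
    {r f g x : ι → α} {h u v : κ → α} {d : δ → α}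
    (hQ : Q.IsSymm) (hR : R.IsSymm) (hp : p.IsSymm)
    (hΥ : Υ = Bᵀ * (R + p) * B) (hdet : IsUnit Υ.det) (hM : M = Bᵀ * p * A)
    (hP : P = Q + Aᵀ * p * A - Mᵀ * Υ⁻¹ * M)
    (hh : h = (Bᵀ * (R + p) * E) *ᵥ d + Bᵀ *ᵥ g)
    (hf : f = (Aᵀ * p * E) *ᵥ d + Aᵀ *ᵥ g - Mᵀ *ᵥ (Υ⁻¹ *ᵥ h) - Q *ᵥ r)
    (hu : u = -(Υ⁻¹ *ᵥ (M *ᵥ x)) - Υ⁻¹ *ᵥ h + v) :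
    (x - r) ⬝ᵥ Q *ᵥ (x - r) + (B *ᵥ u + E *ᵥ d) ⬝ᵥ R *ᵥ (B *ᵥ u + E *ᵥ d)
        + quadLin p g (A *ᵥ x + B *ᵥ u + E *ᵥ d) =
      quadLin P f x
        + (r ⬝ᵥ Q *ᵥ r + (E *ᵥ d) ⬝ᵥ (R + p) *ᵥ (E *ᵥ d) + 2 * ((E *ᵥ d) ⬝ᵥ g)
          - h ⬝ᵥ Υ⁻¹ *ᵥ h + v ⬝ᵥ Υ *ᵥ v) := by
  have Υ_symm : Υ.IsSymm := hΥ ▸ isSymm_transpose_mul_mul_s3 (hR.add hp) B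
  have h_eq : h = Bᵀ *ᵥ ((R + p) *ᵥ (E *ᵥ d) + g) := by
    rw [hh, mulVec_add, ← mulVec_mulVec, ← mulVec_mulVec]
  have f_eq : f = -(Q *ᵥ r) + Aᵀ *ᵥ (p *ᵥ (E *ᵥ d) + g) - Mᵀ *ᵥ (Υ⁻¹ *ᵥ h) := by
    rw [hf, mulVec_add, ← mulVec_mulVec, ← mulVec_mulVec]
    abel
  have u_eq : u = v - Υ⁻¹ *ᵥ (M *ᵥ x + h) := by
    rw [hu, mulVec_add]
    abel
  have value_eq : quadLin P f x = quadLin Q (-(Q *ᵥ r)) x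
      + quadLin (Aᵀ * p * A) (Aᵀ *ᵥ (p *ᵥ (E *ᵥ d) + g)) x
      - quadLin (Mᵀ * Υ⁻¹ * M) (Mᵀ *ᵥ (Υ⁻¹ *ᵥ h)) x := by
    rw [hP, f_eq, quadLin_sub_sub, quadLin_add_add]
  have completed_square : quadLin Υ (M *ᵥ x + h) u = v ⬝ᵥ Υ *ᵥ v
      - (quadLin (Mᵀ * Υ⁻¹ * M) (Mᵀ *ᵥ (Υ⁻¹ *ᵥ h)) x + h ⬝ᵥ Υ⁻¹ *ᵥ h) := by
    rw [u_eq, quadLin_sub_nonsing_inv_mulVec Υ_symm hdet,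
      dotProduct_mulVec_mulVec_add (isSymm_nonsing_inv Υ_symm)]
  rw [add_assoc, inputCost_add_quadLin_next hR hp, ← hΥ, ← hM, ← h_eq, completed_square,
    value_eq, dotProduct_mulVec_sub_eq_quadLin hQ]
  ring

theorem isSymm_of_riccati_recursion {a N : ℕ} {A Q R P : ℕ → Matrix ι ι α}
    {B : ℕ → Matrix ι κ α} {Υ : ℕ → Matrix κ κ α} {M : ℕ → Matrix κ ι α}
    (hQ : ∀ k, a ≤ k → k ≤ N → (Q k).IsSymm) (hR : ∀ k, a ≤ k → k ≤ N → (R k).IsSymm)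
    (hPterm : (P (N + 1)).IsSymm)
    (hΥ : ∀ k, a ≤ k → k ≤ N → Υ k = (B k)ᵀ * (R k + P (k + 1)) * B k)
    (hP : ∀ k, a ≤ k → k ≤ N →
      P k = Q k + (A k)ᵀ * P (k + 1) * A k - (M k)ᵀ * (Υ k)⁻¹ * M k)
    {k : ℕ} (hak : a ≤ k) (hkN : k ≤ N + 1) :
    (P k).IsSymm := by
  induction hkN using Nat.decreasingInduction with
  | self => exact hPterm
  | of_succ k hk next_symm =>
    have hkN : k ≤ N := Nat.lt_succ_iff.mp hk
    have P_next_symm : (P (k + 1)).IsSymm := next_symm (Nat.le_succ_of_le hak)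
    have Υ_symm : (Υ k).IsSymm :=
      hΥ k hak hkN ▸ isSymm_transpose_mul_mul_s3 ((hR k hak hkN).add P_next_symm) (B k)
    rw [hP k hak hkN]
    exact ((hQ k hak hkN).add (isSymm_transpose_mul_mul_s3 P_next_symm (A k))).sub
      (isSymm_transpose_mul_mul_s3 (isSymm_nonsing_inv Υ_symm) (M k))

theorem cost_to_go_identity_general {a N : ℕ} (haN : a ≤ N)
    {A Q R P : ℕ → Matrix ι ι α} {B : ℕ → Matrix ι κ α} {E : ℕ → Matrix ι δ α}
    {Υ : ℕ → Matrix κ κ α} {M : ℕ → Matrix κ ι α}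
    {r f x : ℕ → ι → α} {h u v : ℕ → κ → α} {d : ℕ → δ → α}
    (hQ : ∀ k, a ≤ k → k ≤ N → (Q k).IsSymm) (hR : ∀ k, a ≤ k → k ≤ N → (R k).IsSymm)
    (hPterm : (P (N + 1)).IsSymm)
    (hΥ : ∀ k, a ≤ k → k ≤ N → Υ k = (B k)ᵀ * (R k + P (k + 1)) * B k)
    (hΥdet : ∀ k, a ≤ k → k ≤ N → IsUnit (Υ k).det)
    (hM : ∀ k, a ≤ k → k ≤ N → M k = (B k)ᵀ * P (k + 1) * A k)
    (hP : ∀ k, a ≤ k → k ≤ N →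
      P k = Q k + (A k)ᵀ * P (k + 1) * A k - (M k)ᵀ * (Υ k)⁻¹ * M k)
    (hfterm : f (N + 1) = -(P (N + 1) *ᵥ r (N + 1)))
    (hh : ∀ k, a ≤ k → k ≤ N →
      h k = ((B k)ᵀ * (R k + P (k + 1)) * E k) *ᵥ d k + (B k)ᵀ *ᵥ f (k + 1))
    (hf : ∀ k, a ≤ k → k ≤ N →
      f k = ((A k)ᵀ * P (k + 1) * E k) *ᵥ d k + (A k)ᵀ *ᵥ f (k + 1)
        - (M k)ᵀ *ᵥ ((Υ k)⁻¹ *ᵥ h k) - Q k *ᵥ r k)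
    (hu : ∀ k, a ≤ k → k ≤ N → u k = -((Υ k)⁻¹ *ᵥ (M k *ᵥ x k)) - (Υ k)⁻¹ *ᵥ h k + v k)
    (hx : ∀ k, a ≤ k → k ≤ N → x (k + 1) = A k *ᵥ x k + B k *ᵥ u k + E k *ᵥ d k) :
    (∑ k ∈ Icc a N,
        ((x k - r k) ⬝ᵥ Q k *ᵥ (x k - r k)
          + (B k *ᵥ u k + E k *ᵥ d k) ⬝ᵥ R k *ᵥ (B k *ᵥ u k + E k *ᵥ d k)))
      + (x (N + 1) - r (N + 1)) ⬝ᵥ P (N + 1) *ᵥ (x (N + 1) - r (N + 1)) =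
    x a ⬝ᵥ P a *ᵥ x a + 2 * (x a ⬝ᵥ f a) + r (N + 1) ⬝ᵥ P (N + 1) *ᵥ r (N + 1)
      + ∑ k ∈ Icc a N,
          (r k ⬝ᵥ Q k *ᵥ r k
            + (E k *ᵥ d k) ⬝ᵥ (R k + P (k + 1)) *ᵥ (E k *ᵥ d k)
            + 2 * ((E k *ᵥ d k) ⬝ᵥ f (k + 1))
            - h k ⬝ᵥ (Υ k)⁻¹ *ᵥ h k + v k ⬝ᵥ Υ k *ᵥ v k) := by
  let V (k : ℕ) : α := quadLin (P k) (f k) (x k)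
  have telescope : ∑ k ∈ Icc a N, (V (k + 1) - V k) = V (N + 1) - V a := sum_Icc_sub haN V
  have terminal : (x (N + 1) - r (N + 1)) ⬝ᵥ P (N + 1) *ᵥ (x (N + 1) - r (N + 1)) =
      V (N + 1) + r (N + 1) ⬝ᵥ P (N + 1) *ᵥ r (N + 1) := by
    simp only [V, dotProduct_mulVec_sub_eq_quadLin hPterm, hfterm]
  have stages : ∑ k ∈ Icc a N,
        ((x k - r k) ⬝ᵥ Q k *ᵥ (x k - r k)
          + (B k *ᵥ u k + E k *ᵥ d k) ⬝ᵥ R k *ᵥ (B k *ᵥ u k + E k *ᵥ d k)) =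
      ∑ k ∈ Icc a N,
        (r k ⬝ᵥ Q k *ᵥ r k
          + (E k *ᵥ d k) ⬝ᵥ (R k + P (k + 1)) *ᵥ (E k *ᵥ d k)
          + 2 * ((E k *ᵥ d k) ⬝ᵥ f (k + 1))
          - h k ⬝ᵥ (Υ k)⁻¹ *ᵥ h k + v k ⬝ᵥ Υ k *ᵥ v k - (V (k + 1) - V k)) := by
    refine sum_congr rfl fun k hk => ?_
    obtain ⟨hak, hkN⟩ := mem_Icc.mp hk
    have P_next_symm : (P (k + 1)).IsSymm :=
      isSymm_of_riccati_recursion hQ hR hPterm hΥ hP (Nat.le_succ_of_le hak) (Nat.succ_le_succ hkN)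
    have stage := stageCost_add_quadLin_next (hQ k hak hkN) (hR k hak hkN) P_next_symm
      (hΥ k hak hkN) (hΥdet k hak hkN) (hM k hak hkN) (hP k hak hkN) (hh k hak hkN)
      (hf k hak hkN) (hu k hak hkN)
    rw [← hx k hak hkN] at stage
    linear_combination stage
  have initial : V a = x a ⬝ᵥ P a *ᵥ x a + 2 * (x a ⬝ᵥ f a) := rfl
  rw [stages, sum_sub_distrib, telescope, terminal, ← initial]
  ring

end CommRing

/-- **Cost-to-go identity under the optimal feedback (equation (20) of the paper).**
If the optimal control law is applied from time `n₀+1` up to `N`, then the cost-to-go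
`J̄_{n₀+1}` equals `x_{n₀+1}' P_{n₀+1} x_{n₀+1} + 2 x_{n₀+1}' f_{n₀+1} + r' P_{N+1} r`
plus the stated sum of disturbance/offset terms. -/
theorem cost_to_go_identity
    (n m N : ℕ)
    (A Q R : Matrix (Fin n) (Fin n) ℝ)
    (B E : Matrix (Fin n) (Fin m) ℝ)
    (r : Fin n → ℝ)
    (hQ : Q.PosSemidef) (hR : R.PosSemidef)
    (P : ℕ → Matrix (Fin n) (Fin n) ℝ)
    (Υ : ℕ → Matrix (Fin m) (Fin m) ℝ)
    (M : ℕ → Matrix (Fin m) (Fin n) ℝ)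
    (hPterm : (P (N + 1)).PosSemidef)
    (hΥ : ∀ k ≤ N, Υ k = Bᵀ * (R + P (k + 1)) * B)
    (hM : ∀ k ≤ N, M k = Bᵀ * P (k + 1) * A)
    (hP : ∀ k ≤ N, P k = Q + Aᵀ * P (k + 1) * A - (M k)ᵀ * (Υ k)⁻¹ * M k)
    (hΥpos : ∀ k ≤ N, (Υ k).PosDef)
    (d : ℕ → Fin m → ℝ)
    (f : ℕ → Fin n → ℝ) (h : ℕ → Fin m → ℝ)
    (hfterm : f (N + 1) = -(P (N + 1) *ᵥ r))
    (hh : ∀ k ≤ N, h k = (Bᵀ * (R + P (k + 1)) * E) *ᵥ d k + Bᵀ *ᵥ f (k + 1))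
    (hf : ∀ k ≤ N, f k = (Aᵀ * P (k + 1) * E) *ᵥ d k + Aᵀ *ᵥ f (k + 1)
            - (M k)ᵀ *ᵥ ((Υ k)⁻¹ *ᵥ h k) - Q *ᵥ r)
    -- `n₀ ∈ {0,…,N−1}`
    (n₀ : ℕ) (hn₀ : n₀ + 1 ≤ N)
    (x : ℕ → Fin n → ℝ) (u : ℕ → Fin m → ℝ)
    -- the optimal control law is applied for `k ∈ {n₀+1,…,N}`
    (hu : ∀ k, n₀ + 1 ≤ k → k ≤ N →
        u k = -((Υ k)⁻¹ *ᵥ (M k *ᵥ x k)) - (Υ k)⁻¹ *ᵥ h k)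
    (hx : ∀ k, n₀ + 1 ≤ k → k ≤ N →
        x (k + 1) = A *ᵥ x k + B *ᵥ u k + E *ᵥ d k) :
    (∑ k ∈ Finset.Icc (n₀ + 1) N,
        ((x k - r) ⬝ᵥ (Q *ᵥ (x k - r))
          + (B *ᵥ u k + E *ᵥ d k) ⬝ᵥ (R *ᵥ (B *ᵥ u k + E *ᵥ d k))))
      + (x (N + 1) - r) ⬝ᵥ (P (N + 1) *ᵥ (x (N + 1) - r))
    = x (n₀ + 1) ⬝ᵥ (P (n₀ + 1) *ᵥ x (n₀ + 1)) + 2 * (x (n₀ + 1) ⬝ᵥ f (n₀ + 1))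
      + r ⬝ᵥ (P (N + 1) *ᵥ r)
      + ∑ k ∈ Finset.Icc (n₀ + 1) N,
          (r ⬝ᵥ (Q *ᵥ r)
            + (E *ᵥ d k) ⬝ᵥ ((R + P (k + 1)) *ᵥ (E *ᵥ d k))
            + 2 * ((E *ᵥ d k) ⬝ᵥ f (k + 1))
            - h k ⬝ᵥ ((Υ k)⁻¹ *ᵥ h k)) := by
  simpa using cost_to_go_identity_general (v := 0) hn₀
    (fun _ _ _ => isHermitian_iff_isSymm.mp hQ.isHermitian)
    (fun _ _ _ => isHermitian_iff_isSymm.mp hR.isHermitian)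
    (isHermitian_iff_isSymm.mp hPterm.isHermitian) (fun k _ => hΥ k)
    (fun k _ hk => (isUnit_iff_isUnit_det _).mp (hΥpos k hk).isUnit) (fun k _ => hM k)
    (fun k _ => hP k) hfterm (fun k _ => hh k) (fun k _ => hf k) (by simpa using hu) hx
end

section
/- Suppose Q, R and P_{N+1} are positive semidefinite and that for every initial state x_0 and every disturbance sequence (d_k) the cost J_N admits a unique minimizing control sequence. Then the matrices Υ_k = B'(R + P_{k+1})B are positive definite for every k ∈ {0,…,N}, where P_k is generated by the backward Riccati recursion P_k = Q + A'P_{k+1}A − M_k'Υ_k^{-1}M_k with M_k = B'P_{k+1}A. -/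
open Matrix Finset

/-!
Superposing a zero-cost motion of the undisturbed system (started at the origin, with zero
reference) on an optimal motion gives another optimal motion, because the cost is a positive
semidefinite form in tracking error and force. Uniqueness therefore forces the control of such a
motion to vanish.

Suppose `Υ_j` is positive definite for all `j > k`. One Riccati step is a Schur complement, so
`P_{k+1}`, and with it `Υ_k`, is positive semidefinite. Let `Υ_k v = 0`. Rest at the origin up to
time `k`, apply the impulse `v`, and follow the Riccati feedback afterwards. Completing the square
shows that every later step costs exactly the drop of `y'P_j y`, so the cost telescopes to
`v'Υ_k v = 0`; hence `v = 0`.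
-/

section QuadraticForms

variable {α ι κ μ ν : Type*} [CommSemiring α] [Fintype ι] [Fintype κ] [Fintype μ] [Fintype ν]

lemma mulVec_dotProduct_mulVec_mulVec (X : Matrix ι μ α) (C : Matrix ι κ α) (D : Matrix μ ν α)
    (x : κ → α) (y : ν → α) : (C *ᵥ x) ⬝ᵥ (X *ᵥ (D *ᵥ y)) = x ⬝ᵥ ((Cᵀ * X * D) *ᵥ y) := by
  rw [← mulVec_mulVec, ← mulVec_mulVec, dotProduct_mulVec x, vecMul_transpose]

lemma add_dotProduct_mulVec_add_of_mulVec_eq_zero {X : Matrix ι ι α} (hX : Xᵀ = X) {y : ι → α}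
    (hy : X *ᵥ y = 0) (x : ι → α) : (x + y) ⬝ᵥ (X *ᵥ (x + y)) = x ⬝ᵥ (X *ᵥ x) := by
  have hyx : y ⬝ᵥ (X *ᵥ x) = 0 := by
    rw [dotProduct_mulVec, ← mulVec_transpose, hX, hy, zero_dotProduct]
  rw [mulVec_add, hy, add_zero, add_dotProduct, hyx, add_zero]

end QuadraticForms

section PosSemidef

variable {ι : Type*}

lemma transpose_eq_of_posSemidef {X : Matrix ι ι ℝ} (hX : X.PosSemidef) : Xᵀ = X := by
  simpa only [conjTranspose_eq_transpose_of_trivial] using hX.isHermitian.eq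

variable [Fintype ι]

lemma dotProduct_mulVec_nonneg_of_posSemidef {X : Matrix ι ι ℝ} (hX : X.PosSemidef) (x : ι → ℝ) :
    0 ≤ x ⬝ᵥ (X *ᵥ x) := by
  simpa only [star_trivial] using hX.dotProduct_mulVec_nonneg x

lemma dotProduct_mulVec_eq_zero_iff_of_posSemidef {X : Matrix ι ι ℝ} (hX : X.PosSemidef)
    (x : ι → ℝ) : x ⬝ᵥ (X *ᵥ x) = 0 ↔ X *ᵥ x = 0 := by
  simpa only [star_trivial] using hX.dotProduct_mulVec_zero_iff x

lemma posDef_of_posSemidef_of_forall_mulVec_eq_zero {X : Matrix ι ι ℝ} (hX : X.PosSemidef)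
    (hker : ∀ v, X *ᵥ v = 0 → v = 0) : X.PosDef := by
  classical
  exact hX.posDef_iff_isUnit.2 <| mulVec_injective_iff_isUnit.1 <|
    (injective_iff_map_eq_zero X.mulVecLin).2 hker

end PosSemidef

section RiccatiStep

variable {α ι κ : Type*} [CommRing α] [Fintype ι]

/-- The matrix `Υ = B'(R + P)B`: the second-order part in the control of one stage of the problem,
when `P` weights the next state. -/
def inputHessian (R P : Matrix ι ι α) (B : Matrix ι κ α) : Matrix κ κ α :=
  Bᵀ * (R + P) * B

/-- One backward step of the Riccati recursion, `P ↦ Q + A'PA - M'Υ⁻¹M` with `M = B'PA`. The inverse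
is the junk value `0` when `Υ` is singular. -/
noncomputable def riccatiMap [Fintype κ] [DecidableEq κ] (A Q R P : Matrix ι ι α)
    (B : Matrix ι κ α) : Matrix ι ι α :=
  Q + Aᵀ * P * A - (Bᵀ * P * A)ᵀ * (inputHessian R P B)⁻¹ * (Bᵀ * P * A)

/-- The matrix of the quadratic form `(u, x) ↦ x'Qx + (Bu)'R(Bu) + (Ax + Bu)'P(Ax + Bu)` for
symmetric `P`; the control block comes first so that `riccatiMap` is the Schur complement of that
block. -/
def stageHessian (A Q R P : Matrix ι ι α) (B : Matrix ι κ α) : Matrix (κ ⊕ ι) (κ ⊕ ι) α :=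
  fromBlocks (inputHessian R P B) (Bᵀ * P * A) (Bᵀ * P * A)ᵀ (Q + Aᵀ * P * A)

lemma dotProduct_inputHessian_mulVec [Fintype κ] (R P : Matrix ι ι α) (B : Matrix ι κ α)
    (u : κ → α) :
    u ⬝ᵥ (inputHessian R P B *ᵥ u) =
      (B *ᵥ u) ⬝ᵥ (R *ᵥ (B *ᵥ u)) + (B *ᵥ u) ⬝ᵥ (P *ᵥ (B *ᵥ u)) := by
  rw [inputHessian, ← mulVec_dotProduct_mulVec_mulVec, add_mulVec, dotProduct_add]

lemma dotProduct_stageHessian_mulVec [Fintype κ] (A Q R : Matrix ι ι α) {P : Matrix ι ι α}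
    (B : Matrix ι κ α) (hP : Pᵀ = P) (u : κ → α) (x : ι → α) :
    (u ⊕ᵥ x) ⬝ᵥ (stageHessian A Q R P B *ᵥ (u ⊕ᵥ x)) =
      x ⬝ᵥ (Q *ᵥ x) + (B *ᵥ u) ⬝ᵥ (R *ᵥ (B *ᵥ u))
        + (A *ᵥ x + B *ᵥ u) ⬝ᵥ (P *ᵥ (A *ᵥ x + B *ᵥ u)) := by
  have hM : (Bᵀ * P * A)ᵀ = Aᵀ * P * B := by
    simp only [transpose_mul, transpose_transpose, hP, Matrix.mul_assoc]
  simp only [stageHessian, fromBlocks_mulVec, Sum.elim_comp_inl, Sum.elim_comp_inr,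
    sumElim_dotProduct_sumElim, hM, add_mulVec, mulVec_add, dotProduct_add, add_dotProduct,
    dotProduct_inputHessian_mulVec, mulVec_dotProduct_mulVec_mulVec]
  ring

end RiccatiStep

section RealRiccatiStep

variable {ι κ : Type*} [Fintype ι] {A Q R P : Matrix ι ι ℝ} {B : Matrix ι κ ℝ}

lemma inputHessian_posSemidef [Finite κ] (hR : R.PosSemidef) (hP : P.PosSemidef)
    (B : Matrix ι κ ℝ) : (inputHessian R P B).PosSemidef :=
  (hR.add hP).conjTranspose_mul_mul_same B

lemma stageHessian_posSemidef [Finite κ] (hQ : Q.PosSemidef) (hR : R.PosSemidef)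
    (hP : P.PosSemidef) (A : Matrix ι ι ℝ) (B : Matrix ι κ ℝ) :
    (stageHessian A Q R P B).PosSemidef := by
  have := Fintype.ofFinite κ
  refine .of_dotProduct_mulVec_nonneg ?_ fun z => ?_
  · have hAPA := isHermitian_conjTranspose_mul_mul A hP.isHermitian
    exact isHermitian_fromBlocks_iff.2 ⟨(inputHessian_posSemidef hR hP B).isHermitian, rfl,
      transpose_transpose _, hQ.isHermitian.add hAPA⟩
  · rw [star_trivial, ← Sum.elim_comp_inl_inr z,
      dotProduct_stageHessian_mulVec A Q R B (transpose_eq_of_posSemidef hP)]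
    exact add_nonneg (add_nonneg (dotProduct_mulVec_nonneg_of_posSemidef hQ _)
      (dotProduct_mulVec_nonneg_of_posSemidef hR _)) (dotProduct_mulVec_nonneg_of_posSemidef hP _)

variable [Fintype κ] [DecidableEq κ]

lemma riccatiMap_posSemidef (hQ : Q.PosSemidef) (hR : R.PosSemidef) (hP : P.PosSemidef)
    (hΥ : (inputHessian R P B).PosDef) : (riccatiMap A Q R P B).PosSemidef :=
  letI := hΥ.isUnit.invertible
  (hΥ.fromBlocks₁₁ _ _).1 (stageHessian_posSemidef hQ hR hP A B)

lemma dotProduct_riccatiMap_mulVec (A Q : Matrix ι ι ℝ) (hP : P.PosSemidef)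
    (hΥ : (inputHessian R P B).PosDef) {x : ι → ℝ} {u : κ → ℝ}
    (hu : u = -(((inputHessian R P B)⁻¹ * (Bᵀ * P * A)) *ᵥ x)) :
    x ⬝ᵥ (riccatiMap A Q R P B *ᵥ x) =
      x ⬝ᵥ (Q *ᵥ x) + (B *ᵥ u) ⬝ᵥ (R *ᵥ (B *ᵥ u))
        + (A *ᵥ x + B *ᵥ u) ⬝ᵥ (P *ᵥ (A *ᵥ x + B *ᵥ u)) := by
  let := hΥ.isUnit.invertible
  have hschur := schur_complement_eq₁₁ (Bᵀ * P * A) (Q + Aᵀ * P * A) u x hΥ.isHermitian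
  have hres : u + ((inputHessian R P B)⁻¹ * (Bᵀ * P * A)) *ᵥ x = 0 := by
    rw [hu, neg_add_cancel]
  rw [hres, dotProduct_zero, zero_add] at hschur
  simp only [star_trivial, conjTranspose_eq_transpose_of_trivial, ← dotProduct_mulVec] at hschur
  rw [← dotProduct_stageHessian_mulVec A Q R B (transpose_eq_of_posSemidef hP)]
  exact hschur.symm

end RealRiccatiStep

/-- The data of a finite-horizon tracking problem over the times `0, …, N`: the dynamics
`x_{k+1} = A_k x_k + B_k u_k + f_k`, the reference `r_k`, the weights `Q_k` on the tracking error
and `R_k` on the force `B_k u_k + f_k`, and the terminal weight `S`. The known disturbance enters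
only through the force `f_k = E d_k`. -/
structure TrackingProblem (ι κ : Type*) where
  N : ℕ
  A : ℕ → Matrix ι ι ℝ
  B : ℕ → Matrix ι κ ℝ
  Q : ℕ → Matrix ι ι ℝ
  R : ℕ → Matrix ι ι ℝ
  S : Matrix ι ι ℝ
  f : ℕ → ι → ℝ
  r : ℕ → ι → ℝ

namespace TrackingProblem

variable {ι κ : Type*} [Fintype ι] (p : TrackingProblem ι κ)

/-- `x` is a motion of the system under the force `g`. Phrased with the total force rather than the
control, so that it covers both the given system (`g = Bu + f`) and the undisturbed one
(`g = Bu`). -/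
def IsTrajectory (x g : ℕ → ι → ℝ) : Prop :=
  ∀ k ≤ p.N, x (k + 1) = p.A k *ᵥ x k + g k

/-- The quadratic cost of a tracking error `e` and a force `g`. -/
def energy (e g : ℕ → ι → ℝ) : ℝ :=
  ∑ k ∈ range (p.N + 1), (e k ⬝ᵥ (p.Q k *ᵥ e k) + g k ⬝ᵥ (p.R k *ᵥ g k))
    + e (p.N + 1) ⬝ᵥ (p.S *ᵥ e (p.N + 1))

/-- All weights of the problem are positive semidefinite. -/
structure PosSemidefWeights : Prop where
  Q : ∀ k ≤ p.N, (p.Q k).PosSemidef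
  R : ∀ k ≤ p.N, (p.R k).PosSemidef
  S : p.S.PosSemidef

variable {p}

lemma IsTrajectory.add {x y g h : ℕ → ι → ℝ} (hx : p.IsTrajectory x g)
    (hy : p.IsTrajectory y h) : p.IsTrajectory (x + y) (g + h) := fun k hk => by
  simp only [Pi.add_apply, hx k hk, hy k hk, mulVec_add]
  abel

lemma energy_eq_zero_iff (hp : p.PosSemidefWeights) {e g : ℕ → ι → ℝ} :
    p.energy e g = 0 ↔
      (∀ k ≤ p.N, p.Q k *ᵥ e k = 0 ∧ p.R k *ᵥ g k = 0) ∧ p.S *ᵥ e (p.N + 1) = 0 := by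
  have hQ k (hk : k ≤ p.N) := dotProduct_mulVec_nonneg_of_posSemidef (hp.Q k hk) (e k)
  have hR k (hk : k ≤ p.N) := dotProduct_mulVec_nonneg_of_posSemidef (hp.R k hk) (g k)
  have hstage : ∀ k ∈ range (p.N + 1),
      0 ≤ e k ⬝ᵥ (p.Q k *ᵥ e k) + g k ⬝ᵥ (p.R k *ᵥ g k) := fun k hk =>
    add_nonneg (hQ k (mem_range_succ_iff.1 hk)) (hR k (mem_range_succ_iff.1 hk))
  rw [energy, add_eq_zero_iff_of_nonneg (sum_nonneg hstage)
      (dotProduct_mulVec_nonneg_of_posSemidef hp.S _), sum_eq_zero_iff_of_nonneg hstage,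
    dotProduct_mulVec_eq_zero_iff_of_posSemidef hp.S]
  refine and_congr_left' (forall_congr' fun k => ?_)
  rw [mem_range_succ_iff]
  refine forall_congr' fun hk => ?_
  rw [add_eq_zero_iff_of_nonneg (hQ k hk) (hR k hk),
    dotProduct_mulVec_eq_zero_iff_of_posSemidef (hp.Q k hk),
    dotProduct_mulVec_eq_zero_iff_of_posSemidef (hp.R k hk)]

lemma energy_add_of_energy_eq_zero (hp : p.PosSemidefWeights) {e' g' : ℕ → ι → ℝ}
    (h : p.energy e' g' = 0) (e g : ℕ → ι → ℝ) :
    p.energy (e + e') (g + g') = p.energy e g := by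
  obtain ⟨hstage, hend⟩ := (energy_eq_zero_iff hp).1 h
  refine congrArg₂ (· + ·) (sum_congr rfl fun k hk => ?_)
    (add_dotProduct_mulVec_add_of_mulVec_eq_zero (transpose_eq_of_posSemidef hp.S) hend _)
  have hk := mem_range_succ_iff.1 hk
  exact congrArg₂ (· + ·)
    (add_dotProduct_mulVec_add_of_mulVec_eq_zero (transpose_eq_of_posSemidef (hp.Q k hk))
      (hstage k hk).1 _)
    (add_dotProduct_mulVec_add_of_mulVec_eq_zero (transpose_eq_of_posSemidef (hp.R k hk))
      (hstage k hk).2 _)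

lemma energy_eq_of_bellman {P : ℕ → Matrix ι ι ℝ} {y g : ℕ → ι → ℝ} (hend : P (p.N + 1) = p.S)
    (hstep : ∀ k ≤ p.N, y k ⬝ᵥ (P k *ᵥ y k) =
      y k ⬝ᵥ (p.Q k *ᵥ y k) + g k ⬝ᵥ (p.R k *ᵥ g k) + y (k + 1) ⬝ᵥ (P (k + 1) *ᵥ y (k + 1))) :
    p.energy y g = y 0 ⬝ᵥ (P 0 *ᵥ y 0) := by
  have htelescope := sum_range_sub' (fun k => y k ⬝ᵥ (P k *ᵥ y k)) (p.N + 1)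
  rw [energy, ← hend, ← eq_sub_iff_add_eq, ← htelescope]
  exact sum_congr rfl fun k hk => eq_sub_of_add_eq (hstep k (mem_range_succ_iff.1 hk)).symm

/-- `P` solves the backward Riccati recursion of the problem, with terminal value `S`. -/
structure IsRiccatiSolution [Fintype κ] [DecidableEq κ] (p : TrackingProblem ι κ)
    (P : ℕ → Matrix ι ι ℝ) : Prop where
  terminal : P (p.N + 1) = p.S
  step : ∀ k ≤ p.N, P k = riccatiMap (p.A k) (p.Q k) (p.R k) (P (k + 1)) (p.B k)

section Control

variable [Fintype κ]

/-- The part `B_k u_k` of the force that is due to the control `u`. -/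
def actuation (p : TrackingProblem ι κ) (u : ℕ → κ → ℝ) : ℕ → ι → ℝ :=
  fun k => p.B k *ᵥ u k

/-- `u` minimizes the tracking cost among all controls, from the initial state `x₀`. Trajectories
are not determined past the horizon, hence the quantification over all of them. -/
def IsMinimizer (p : TrackingProblem ι κ) (x₀ : ι → ℝ) (u : ℕ → κ → ℝ) : Prop :=
  ∃ x, x 0 = x₀ ∧ p.IsTrajectory x (p.actuation u + p.f) ∧
    ∀ u' x', x' 0 = x₀ → p.IsTrajectory x' (p.actuation u' + p.f) →
      p.energy (x - p.r) (p.actuation u + p.f) ≤ p.energy (x' - p.r) (p.actuation u' + p.f)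

lemma IsMinimizer.add_of_energy_eq_zero (hp : p.PosSemidefWeights) {x₀ : ι → ℝ}
    {u w : ℕ → κ → ℝ} {y : ℕ → ι → ℝ} (hu : p.IsMinimizer x₀ u) (hy₀ : y 0 = 0)
    (hy : p.IsTrajectory y (p.actuation w)) (henergy : p.energy y (p.actuation w) = 0) :
    p.IsMinimizer x₀ (u + w) := by
  obtain ⟨x, hx₀, hx, hmin⟩ := hu
  have hforce : p.actuation (u + w) + p.f = p.actuation u + p.f + p.actuation w := by
    rw [add_right_comm]
    exact congrArg (· + p.f) (funext fun k => mulVec_add _ _ _)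
  refine ⟨x + y, by rw [Pi.add_apply, hx₀, hy₀, add_zero], hforce ▸ hx.add hy, ?_⟩
  rw [hforce, add_sub_right_comm, energy_add_of_energy_eq_zero hp henergy]
  exact hmin

lemma exists_trajectory_impulse_then_feedback (p : TrackingProblem ι κ) (K : ℕ → Matrix κ ι ℝ)
    (k : ℕ) (v : κ → ℝ) :
    ∃ (w : ℕ → κ → ℝ) (y : ℕ → ι → ℝ), p.IsTrajectory y (p.actuation w) ∧
      (∀ j ≤ k, y j = 0) ∧ w k = v ∧ ∀ j ≠ k, w j = -(K j *ᵥ y j) := by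
  -- The feedback law may act before time `k` too, since it gives the zero control at the origin.
  let φ : ℕ → (ι → ℝ) → κ → ℝ := fun j z => if j = k then v else -(K j *ᵥ z)
  let y : ℕ → ι → ℝ := fun j => Nat.rec 0 (fun j z => p.A j *ᵥ z + p.B j *ᵥ φ j z) j
  refine ⟨fun j => φ j (y j), y, fun _ _ => rfl, fun j hj => ?_, if_pos rfl,
    fun j hj => if_neg hj⟩
  induction j with
  | zero => rfl
  | succ j ih =>
    change p.A j *ᵥ y j + p.B j *ᵥ φ j (y j) = 0
    simp only [ih (by omega), φ, if_neg (show j ≠ k by omega), mulVec_zero, neg_zero, add_zero]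

end Control

namespace IsRiccatiSolution

variable [Fintype κ] [DecidableEq κ] {P : ℕ → Matrix ι ι ℝ}

lemma posSemidef (hP : p.IsRiccatiSolution P) (hp : p.PosSemidefWeights) {k : ℕ}
    (hk : k ≤ p.N + 1)
    (hΥ : ∀ j, k ≤ j → j ≤ p.N → (inputHessian (p.R j) (P (j + 1)) (p.B j)).PosDef) :
    (P k).PosSemidef := by
  induction hk using Nat.decreasingInduction with
  | self => exact hP.terminal ▸ hp.S
  | of_succ k hk ih =>
    have hkN : k ≤ p.N := Nat.le_of_lt_succ hk
    rw [hP.step k hkN]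
    exact riccatiMap_posSemidef (hp.Q k hkN) (hp.R k hkN)
      (ih fun j hj => hΥ j (Nat.le_of_succ_le hj)) (hΥ k le_rfl hkN)

lemma exists_trajectory_energy_eq_zero (hP : p.IsRiccatiSolution P) (hp : p.PosSemidefWeights)
    {k : ℕ} (hΥ : ∀ j, k < j → j ≤ p.N → (inputHessian (p.R j) (P (j + 1)) (p.B j)).PosDef)
    {v : κ → ℝ} (hv : inputHessian (p.R k) (P (k + 1)) (p.B k) *ᵥ v = 0) :
    ∃ (w : ℕ → κ → ℝ) (y : ℕ → ι → ℝ), w k = v ∧ y 0 = 0 ∧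
      p.IsTrajectory y (p.actuation w) ∧ p.energy y (p.actuation w) = 0 := by
  obtain ⟨w, y, htraj, hrest, himpulse, hfeedback⟩ := p.exists_trajectory_impulse_then_feedback
    (fun j => (inputHessian (p.R j) (P (j + 1)) (p.B j))⁻¹ * ((p.B j)ᵀ * P (j + 1) * p.A j)) k v
  have hy₀ : y 0 = 0 := hrest 0 k.zero_le
  refine ⟨w, y, himpulse, hy₀, htraj, ?_⟩
  rw [energy_eq_of_bellman hP.terminal, hy₀, zero_dotProduct]
  intro j hj
  rcases lt_trichotomy j k with hjk | rfl | hkj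
  · have hw : w j = 0 := by
      rw [hfeedback j hjk.ne, hrest j hjk.le, mulVec_zero, neg_zero]
    simp only [actuation, hw, hrest j hjk.le, hrest (j + 1) hjk, mulVec_zero, dotProduct_zero,
      add_zero]
  · have hcost := dotProduct_inputHessian_mulVec (p.R j) (P (j + 1)) (p.B j) v
    rw [hv, dotProduct_zero] at hcost
    simpa only [htraj j hj, actuation, himpulse, hrest j le_rfl, mulVec_zero, dotProduct_zero,
      zero_add] using hcost
  · have hnext : (P (j + 1)).PosSemidef :=
      hP.posSemidef hp (Nat.succ_le_succ hj) fun i hi => hΥ i (by omega)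
    rw [hP.step j hj, htraj j hj]
    exact dotProduct_riccatiMap_mulVec _ _ hnext (hΥ j hkj hj) (hfeedback j hkj.ne')

end IsRiccatiSolution

end TrackingProblem

theorem necessity_posDef_of_unique_solvability_general {ι κ : Type*} [Fintype ι] [Fintype κ]
    [DecidableEq κ] (p : TrackingProblem ι κ) (hp : p.PosSemidefWeights) (P : ℕ → Matrix ι ι ℝ)
    (hP : p.IsRiccatiSolution P) (x₀ : ι → ℝ) (hexists : ∃ u, p.IsMinimizer x₀ u)
    (huniq : ∀ u u', p.IsMinimizer x₀ u → p.IsMinimizer x₀ u' → ∀ k ≤ p.N, u k = u' k) :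
    ∀ k ≤ p.N, (inputHessian (p.R k) (P (k + 1)) (p.B k)).PosDef := by
  refine Nat.strong_decreasing_induction ⟨p.N, fun k hk hkN => absurd hkN hk.not_ge⟩ ?_
  intro k hlater hk
  have hnext : (P (k + 1)).PosSemidef := hP.posSemidef hp (Nat.succ_le_succ hk) hlater
  refine posDef_of_posSemidef_of_forall_mulVec_eq_zero
    (inputHessian_posSemidef (hp.R k hk) hnext (p.B k)) fun v hv => ?_
  obtain ⟨w, y, rfl, hy₀, hy, henergy⟩ := hP.exists_trajectory_energy_eq_zero hp hlater hv
  obtain ⟨u, hu⟩ := hexists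
  exact left_eq_add.1 (huniq u (u + w) hu (hu.add_of_energy_eq_zero hp hy₀ hy henergy) k hk)

/-- **Necessity part of the finite-horizon solvability theorem.**
If for every initial state and every disturbance sequence the cost `J_N` admits a unique
minimizing control sequence, then the matrices `Υ_k = B'(R + P_{k+1})B` generated by the
backward Riccati recursion are positive definite for every `k ∈ {0,…,N}`. -/
theorem necessity_posDef_of_unique_solvability
    (n m N : ℕ)
    (A Q R : Matrix (Fin n) (Fin n) ℝ)
    (B E : Matrix (Fin n) (Fin m) ℝ)
    (r : Fin n → ℝ)
    (hQ : Q.PosSemidef) (hR : R.PosSemidef)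
    (P : ℕ → Matrix (Fin n) (Fin n) ℝ)
    (Υ : ℕ → Matrix (Fin m) (Fin m) ℝ)
    (M : ℕ → Matrix (Fin m) (Fin n) ℝ)
    (hPterm : (P (N + 1)).PosSemidef)
    (hΥ : ∀ k ≤ N, Υ k = Bᵀ * (R + P (k + 1)) * B)
    (hM : ∀ k ≤ N, M k = Bᵀ * P (k + 1) * A)
    (hP : ∀ k ≤ N, P k = Q + Aᵀ * P (k + 1) * A - (M k)ᵀ * (Υ k)⁻¹ * M k)
    -- the cost functional `J_N` for disturbance `d`, trajectory `x` and control `u`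
    (J : (ℕ → Fin m → ℝ) → (ℕ → Fin n → ℝ) → (ℕ → Fin m → ℝ) → ℝ)
    (hJ : ∀ d x u, J d x u =
        (∑ k ∈ range (N + 1),
          ((x k - r) ⬝ᵥ (Q *ᵥ (x k - r))
            + (B *ᵥ u k + E *ᵥ d k) ⬝ᵥ (R *ᵥ (B *ᵥ u k + E *ᵥ d k))))
        + (x (N + 1) - r) ⬝ᵥ (P (N + 1) *ᵥ (x (N + 1) - r)))
    -- `IsMin d x0 u` : `u` is a minimizing control for initial state `x0` and disturbance `d`
    (IsMin : (ℕ → Fin m → ℝ) → (Fin n → ℝ) → (ℕ → Fin m → ℝ) → Prop)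
    (hIsMin : ∀ d x0 u, IsMin d x0 u ↔
        ∃ x : ℕ → Fin n → ℝ, x 0 = x0
          ∧ (∀ k ≤ N, x (k + 1) = A *ᵥ x k + B *ᵥ u k + E *ᵥ d k)
          ∧ ∀ (u' : ℕ → Fin m → ℝ) (x' : ℕ → Fin n → ℝ),
              x' 0 = x0 → (∀ k ≤ N, x' (k + 1) = A *ᵥ x' k + B *ᵥ u' k + E *ᵥ d k) →
              J d x u ≤ J d x' u')
    -- for every initial state and disturbance there exists a unique minimizing control
    (hexists : ∀ (d : ℕ → Fin m → ℝ) (x0 : Fin n → ℝ), ∃ u, IsMin d x0 u)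
    (huniq : ∀ (d : ℕ → Fin m → ℝ) (x0 : Fin n → ℝ) (u u' : ℕ → Fin m → ℝ),
        IsMin d x0 u → IsMin d x0 u' → ∀ k ≤ N, u k = u' k) :
    ∀ k ≤ N, (Υ k).PosDef := by
  let p : TrackingProblem (Fin n) (Fin m) :=
    ⟨N, fun _ => A, fun _ => B, fun _ => Q, fun _ => R, P (N + 1), fun _ => E *ᵥ 0, fun _ => r⟩
  have hmin (u) : IsMin 0 0 u ↔ p.IsMinimizer 0 u := by
    simp only [hIsMin, hJ, add_assoc]
    rfl
  have hric : p.IsRiccatiSolution P := ⟨rfl, fun k hk => by rw [hP k hk, hΥ k hk, hM k hk]; rfl⟩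
  intro k hk
  rw [hΥ k hk]
  refine necessity_posDef_of_unique_solvability_general p ⟨fun _ _ => hQ, fun _ _ => hR, hPterm⟩
    P hric 0 ((hexists 0 0).imp fun u => (hmin u).1) (fun u u' hu hu' => ?_) k hk
  exact huniq 0 0 u u' ((hmin u).2 hu) ((hmin u').2 hu')
end

section
/- Suppose Υ_k is positive definite for every k ∈ {0,…,N}. Define Ā_k = A − B Υ_k^{-1} M_k, F_k = (Ā_k' P_{k+1} − M_k'Υ_k^{-1}B'R)E, H_k = B'(R + P_{k+1})E, and the backward recursion 𝓡_k = Ā_k' 𝓡_{k+1} + Q with 𝓡_{N+1} = P_{N+1}. Then the solutions of the backward equations for f and h admit the explicit representations f_k = Σ_{s=k}^N (Ā_k' Ā_{k+1}' ⋯ Ā_{s-1}') F_s d_s − 𝓡_k r (the matrix product being the identity when s = k) and h_k = H_k d_k + B' [ Σ_{s=k+1}^N (Ā_{k+1}' ⋯ Ā_{s-1}') F_s d_s − 𝓡_{k+1} r ] for all k ∈ {0,…,N}. -/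
open Matrix

/-- The ordered transpose product `Ā_k' Ā_{k+1}' ⋯ Ā_{s-1}'` (the identity when `s ≤ k`). -/
noncomputable def transProd {n : ℕ} (Ab : ℕ → Matrix (Fin n) (Fin n) ℝ) (k s : ℕ) :
    Matrix (Fin n) (Fin n) ℝ :=
  ((List.range (s - k)).map fun j => (Ab (k + j))ᵀ).prod

/-!
For any feedback gain `K`, eliminating `h` turns `Aᵀ` into the closed-loop matrix `(A - B * K)ᵀ` in
the equation for `f`; the theorem is the case `K k = (Υ k)⁻¹ * M k`. Since
`f (N + 1) = -(𝓡 (N + 1) *ᵥ r)`, and `𝓡` absorbs the constant source `-(Q *ᵥ r)`, the shifted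
sequence `f k + 𝓡 k *ᵥ r` vanishes at `N + 1` and is driven by `F k *ᵥ d k` alone. Unrolling its
recursion gives the sum.
-/

section TransitionProducts

variable {n : ℕ} (T : ℕ → Matrix (Fin n) (Fin n) ℝ)

theorem transProd_self (k : ℕ) : transProd T k k = 1 := by
  simp [transProd]

theorem transProd_eq_transpose_mul {k s : ℕ} (hks : k < s) :
    transProd T k s = (T k)ᵀ * transProd T (k + 1) s := by
  have hlen : s - k = s - (k + 1) + 1 := by omega
  simp only [transProd, hlen, List.range_succ_eq_map, List.map_cons, List.map_map,
    List.prod_cons, Function.comp_def, Nat.succ_eq_add_one, add_zero, add_assoc, add_comm 1]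

theorem sum_transProd_mulVec_eq_add {k N : ℕ} (hk : k ≤ N) (g : ℕ → Fin n → ℝ) :
    ∑ s ∈ Finset.Icc k N, transProd T k s *ᵥ g s =
      (T k)ᵀ *ᵥ (∑ s ∈ Finset.Icc (k + 1) N, transProd T (k + 1) s *ᵥ g s) + g k := by
  have tail : ∑ s ∈ Finset.Icc (k + 1) N, transProd T k s *ᵥ g s =
      (T k)ᵀ *ᵥ ∑ s ∈ Finset.Icc (k + 1) N, transProd T (k + 1) s *ᵥ g s := by
    rw [mulVec_sum]
    refine Finset.sum_congr rfl fun s hs => ?_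
    rw [transProd_eq_transpose_mul T (Finset.mem_Icc.mp hs).1, mulVec_mulVec]
  rw [← Finset.add_sum_Ioc_eq_sum_Icc hk, ← Finset.Icc_add_one_left_eq_Ioc, tail,
    transProd_self, one_mulVec, add_comm]

theorem eq_sum_transProd_mulVec_add {N : ℕ} {x g : ℕ → Fin n → ℝ}
    (hx : ∀ k ≤ N, x k = (T k)ᵀ *ᵥ x (k + 1) + g k) {k : ℕ} (hk : k ≤ N + 1) :
    x k = (∑ s ∈ Finset.Icc k N, transProd T k s *ᵥ g s) +
      transProd T k (N + 1) *ᵥ x (N + 1) := by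
  induction hk using Nat.decreasingInduction with
  | self => simp [transProd_self]
  | of_succ k hk ih =>
    have hkN : k ≤ N := Nat.le_of_lt_succ hk
    rw [hx k hkN, ih, sum_transProd_mulVec_eq_add T hkN,
      transProd_eq_transpose_mul T hk, mulVec_add, mulVec_mulVec]
    abel

end TransitionProducts

theorem closedLoop_mulVec {ι κ μ α : Type*} [Fintype ι] [Fintype κ] [Fintype μ] [CommRing α]
    (A P R : Matrix ι ι α) (B : Matrix ι κ α) (E : Matrix ι μ α) (K : Matrix κ ι α)
    (d : μ → α) (f : ι → α) :
    (Aᵀ * P * E) *ᵥ d + Aᵀ *ᵥ f - Kᵀ *ᵥ ((Bᵀ * (R + P) * E) *ᵥ d + Bᵀ *ᵥ f) =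
      (((A - B * K)ᵀ * P - Kᵀ * Bᵀ * R) * E) *ᵥ d + (A - B * K)ᵀ *ᵥ f := by
  simp only [transpose_sub, transpose_mul, mulVec_add, mulVec_mulVec, sub_mulVec, add_mulVec,
    Matrix.add_mul, Matrix.mul_add, Matrix.sub_mul, Matrix.mul_assoc]
  abel

theorem transpose_inv_mul_of_isSymm {ι κ α : Type*} [Fintype κ] [DecidableEq κ] [CommRing α]
    {S : Matrix κ κ α} (hS : S.IsSymm) (M : Matrix κ ι α) : (S⁻¹ * M)ᵀ = Mᵀ * S⁻¹ := by
  rw [transpose_mul, transpose_nonsing_inv, hS.eq]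

theorem explicit_representation_f_h_general {n N : ℕ} {κ μ : Type*} [Fintype κ] [Fintype μ]
    {A Q R : Matrix (Fin n) (Fin n) ℝ} {B : Matrix (Fin n) κ ℝ} {E : Matrix (Fin n) μ ℝ}
    {r : Fin n → ℝ} {P : ℕ → Matrix (Fin n) (Fin n) ℝ} {K : ℕ → Matrix κ (Fin n) ℝ}
    {d : ℕ → μ → ℝ} {f : ℕ → Fin n → ℝ} {h : ℕ → κ → ℝ}
    {Ab : ℕ → Matrix (Fin n) (Fin n) ℝ} {F : ℕ → Matrix (Fin n) μ ℝ} {H : ℕ → Matrix κ μ ℝ}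
    {𝓡 : ℕ → Matrix (Fin n) (Fin n) ℝ}
    (hfterm : f (N + 1) = -(P (N + 1) *ᵥ r))
    (hh : ∀ k ≤ N, h k = (Bᵀ * (R + P (k + 1)) * E) *ᵥ d k + Bᵀ *ᵥ f (k + 1))
    (hf : ∀ k ≤ N, f k = (Aᵀ * P (k + 1) * E) *ᵥ d k + Aᵀ *ᵥ f (k + 1)
      - (K k)ᵀ *ᵥ h k - Q *ᵥ r)
    (hAb : ∀ k ≤ N, Ab k = A - B * K k)
    (hF : ∀ k ≤ N, F k = ((Ab k)ᵀ * P (k + 1) - (K k)ᵀ * Bᵀ * R) * E)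
    (hH : ∀ k ≤ N, H k = Bᵀ * (R + P (k + 1)) * E)
    (h𝓡term : 𝓡 (N + 1) = P (N + 1))
    (h𝓡 : ∀ k ≤ N, 𝓡 k = (Ab k)ᵀ * 𝓡 (k + 1) + Q) :
    (∀ k ≤ N,
      f k = (∑ s ∈ Finset.Icc k N, transProd Ab k s *ᵥ (F s *ᵥ d s)) - 𝓡 k *ᵥ r) ∧
    (∀ k ≤ N,
      h k = H k *ᵥ d k + Bᵀ *ᵥ ((∑ s ∈ Finset.Icc (k + 1) N,
        transProd Ab (k + 1) s *ᵥ (F s *ᵥ d s)) - 𝓡 (k + 1) *ᵥ r)) := by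
  have terminal : f (N + 1) + 𝓡 (N + 1) *ᵥ r = 0 := by
    rw [hfterm, h𝓡term, neg_add_cancel]
  have recursion : ∀ k ≤ N,
      f k + 𝓡 k *ᵥ r = (Ab k)ᵀ *ᵥ (f (k + 1) + 𝓡 (k + 1) *ᵥ r) + F k *ᵥ d k := by
    intro k hk
    rw [hf k hk, hh k hk, closedLoop_mulVec, ← hAb k hk, ← hF k hk, h𝓡 k hk, add_mulVec,
      mulVec_add, mulVec_mulVec]
    abel
  have solution : ∀ k ≤ N + 1,
      f k = (∑ s ∈ Finset.Icc k N, transProd Ab k s *ᵥ (F s *ᵥ d s)) - 𝓡 k *ᵥ r := by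
    intro k hk
    have unrolled := eq_sum_transProd_mulVec_add (x := fun k => f k + 𝓡 k *ᵥ r) Ab recursion hk
    rw [terminal, mulVec_zero, add_zero] at unrolled
    exact eq_sub_of_add_eq unrolled
  refine ⟨fun k hk => solution k (Nat.le_succ_of_le hk), fun k hk => ?_⟩
  rw [hh k hk, hH k hk, ← solution (k + 1) (Nat.succ_le_succ hk)]

/-- **Explicit representation of the feedforward terms `f_k` and `h_k` (Remark 6).**
With `Ā_k = A − B Υ_k⁻¹ M_k`, `F_k = (Ā_k' P_{k+1} − M_k'Υ_k⁻¹B'R)E`,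
`H_k = B'(R + P_{k+1})E` and `𝓡_k = Ā_k'𝓡_{k+1} + Q`, `𝓡_{N+1} = P_{N+1}`, one has
`f_k = Σ_{s=k}^N Ā_k'⋯Ā_{s-1}' F_s d_s − 𝓡_k r` and
`h_k = H_k d_k + B'[Σ_{s=k+1}^N Ā_{k+1}'⋯Ā_{s-1}' F_s d_s − 𝓡_{k+1} r]`. -/
theorem explicit_representation_f_h
    (n m N : ℕ)
    (A Q R : Matrix (Fin n) (Fin n) ℝ)
    (B E : Matrix (Fin n) (Fin m) ℝ)
    (r : Fin n → ℝ)
    (hQ : Q.PosSemidef) (hR : R.PosSemidef)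
    (P : ℕ → Matrix (Fin n) (Fin n) ℝ)
    (Υ : ℕ → Matrix (Fin m) (Fin m) ℝ)
    (M : ℕ → Matrix (Fin m) (Fin n) ℝ)
    (hPterm : (P (N + 1)).PosSemidef)
    (hΥ : ∀ k ≤ N, Υ k = Bᵀ * (R + P (k + 1)) * B)
    (hM : ∀ k ≤ N, M k = Bᵀ * P (k + 1) * A)
    (hP : ∀ k ≤ N, P k = Q + Aᵀ * P (k + 1) * A - (M k)ᵀ * (Υ k)⁻¹ * M k)
    (hΥpos : ∀ k ≤ N, (Υ k).PosDef)
    (d : ℕ → Fin m → ℝ)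
    (f : ℕ → Fin n → ℝ) (h : ℕ → Fin m → ℝ)
    (hfterm : f (N + 1) = -(P (N + 1) *ᵥ r))
    (hh : ∀ k ≤ N, h k = (Bᵀ * (R + P (k + 1)) * E) *ᵥ d k + Bᵀ *ᵥ f (k + 1))
    (hf : ∀ k ≤ N, f k = (Aᵀ * P (k + 1) * E) *ᵥ d k + Aᵀ *ᵥ f (k + 1)
            - (M k)ᵀ *ᵥ ((Υ k)⁻¹ *ᵥ h k) - Q *ᵥ r)
    (Ab : ℕ → Matrix (Fin n) (Fin n) ℝ)
    (F : ℕ → Matrix (Fin n) (Fin m) ℝ)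
    (H : ℕ → Matrix (Fin m) (Fin m) ℝ)
    (𝓡 : ℕ → Matrix (Fin n) (Fin n) ℝ)
    (hAb : ∀ k ≤ N, Ab k = A - B * ((Υ k)⁻¹ * M k))
    (hF : ∀ k ≤ N, F k = ((Ab k)ᵀ * P (k + 1) - (M k)ᵀ * (Υ k)⁻¹ * Bᵀ * R) * E)
    (hH : ∀ k ≤ N, H k = Bᵀ * (R + P (k + 1)) * E)
    (h𝓡term : 𝓡 (N + 1) = P (N + 1))
    (h𝓡 : ∀ k ≤ N, 𝓡 k = (Ab k)ᵀ * 𝓡 (k + 1) + Q) :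
    (∀ k ≤ N,
        f k = (∑ s ∈ Finset.Icc k N, transProd Ab k s *ᵥ (F s *ᵥ d s)) - 𝓡 k *ᵥ r)
    ∧ (∀ k ≤ N,
        h k = H k *ᵥ d k
          + Bᵀ *ᵥ ((∑ s ∈ Finset.Icc (k + 1) N, transProd Ab (k + 1) s *ᵥ (F s *ᵥ d s))
              - 𝓡 (k + 1) *ᵥ r)) := by
  have gain : ∀ k ≤ N, ((Υ k)⁻¹ * M k)ᵀ = (M k)ᵀ * (Υ k)⁻¹ := fun k hk =>
    transpose_inv_mul_of_isSymm (isHermitian_iff_isSymm.mp (hΥpos k hk).isHermitian) (M k)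
  exact explicit_representation_f_h_general (K := fun k => (Υ k)⁻¹ * M k) hfterm hh
    (fun k hk => by rw [hf k hk, gain k hk, mulVec_mulVec (h k)]) hAb
    (fun k hk => by rw [gain k hk, hF k hk]) hH h𝓡term h𝓡
end

section
/- Suppose Q, R, P_{N+1} ∈ ℝ^{n×n} are positive semidefinite. If there exist sequences (x_k)_{k=0}^{N+1}, (u_k)_{k=0}^{N}, (λ_k)_{k=0}^{N} satisfying the forward–backward difference equations 0 = B'R B u_k + B'λ_k + B'R E d_k, λ_{k-1} = Q(x_k − r) + A'λ_k, x_{k+1} = A x_k + B u_k + E d_k, λ_N = P_{N+1}(x_{N+1} − r), then the control sequence (u_k) minimizes the cost J_N over all control sequences driving the system from the same initial state x_0 with the same disturbances (d_k). -/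
open Matrix Finset

/-!
The cost is a quadratic function of the trajectory, so its difference between two admissible
trajectories is exactly a first-order term plus a second-order term. Summation by parts against the
costate (the dynamics run forward, the costate equation backward along the transposed matrices)
turns the first-order term into a combination of the stationarity equations, so it vanishes at a
solution of the forward–backward equations; the second-order term is a sum of positive
semidefinite forms.
-/

theorem isSymm_of_isHermitian {α ι : Type*} [Star α] [TrivialStar α] {M : Matrix ι ι α}
    (hM : M.IsHermitian) : M.IsSymm := by
  rw [IsSymm, ← conjTranspose_eq_transpose_of_trivial, hM.eq]

section BilinearIdentities

variable {𝕜 ι : Type*} [CommRing 𝕜] [Fintype ι]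

theorem dotProduct_mulVec_self_eq_add_sub {M : Matrix ι ι 𝕜} (hM : M.IsSymm) (v w : ι → 𝕜) :
    w ⬝ᵥ M *ᵥ w =
      v ⬝ᵥ M *ᵥ v + 2 * ((w - v) ⬝ᵥ M *ᵥ v) + (w - v) ⬝ᵥ M *ᵥ (w - v) := by
  have symm : v ⬝ᵥ M *ᵥ w = w ⬝ᵥ M *ᵥ v := by
    simpa only [hM.eq] using dotProduct_transpose_mulVec M v w
  simp only [mulVec_sub, sub_dotProduct, dotProduct_sub, symm]
  ring

theorem dotProduct_mulVec_self_nonneg_of_posSemidef [PartialOrder 𝕜] [StarRing 𝕜] [TrivialStar 𝕜]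
    {M : Matrix ι ι 𝕜} (hM : M.PosSemidef) (v : ι → 𝕜) : 0 ≤ v ⬝ᵥ M *ᵥ v := by
  simpa only [star_trivial] using hM.dotProduct_mulVec_nonneg v

theorem sum_dotProduct_add_dotProduct_eq_of_adjoint {A : ℕ → Matrix ι ι 𝕜}
    {y f q p : ℕ → ι → 𝕜} {K : ℕ}
    (hy : ∀ k < K, y (k + 1) = A k *ᵥ y k + f k)
    (hp : ∀ k < K, p k = q k + (A k)ᵀ *ᵥ p (k + 1)) :
    ∑ k ∈ range K, y k ⬝ᵥ q k + y K ⬝ᵥ p K =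
      y 0 ⬝ᵥ p 0 + ∑ k ∈ range K, f k ⬝ᵥ p (k + 1) := by
  have increment : ∀ k ∈ range K,
      y (k + 1) ⬝ᵥ p (k + 1) - y k ⬝ᵥ p k = f k ⬝ᵥ p (k + 1) - y k ⬝ᵥ q k := by
    intro k hk
    rw [hp k (mem_range.mp hk), hy k (mem_range.mp hk), dotProduct_add, add_dotProduct,
      dotProduct_transpose_mulVec, dotProduct_comm (p (k + 1))]
    ring
  have telescoped := sum_congr rfl increment
  rw [sum_range_sub (fun k ↦ y k ⬝ᵥ p k), sum_sub_distrib] at telescoped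
  linear_combination telescoped

end BilinearIdentities

/-- A finite-horizon linear-quadratic tracking problem with stages `0, …, N` and time-varying data:
dynamics `x (k + 1) = A k x k + B k u k + E k d k` with known disturbance `d`, weight `Q k` on the
tracking error `x k - r k`, weight `R k` on the total input `B k u k + E k d k`, and weight `P` on
the final tracking error `x (N + 1) - r (N + 1)`. Sequences are indexed by all of `ℕ`, and their
values beyond the horizon play no role. -/
structure LQTracking (𝕜 ι κ η : Type*) where
  N : ℕ
  A : ℕ → Matrix ι ι 𝕜
  B : ℕ → Matrix ι κ 𝕜
  E : ℕ → Matrix ι η 𝕜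
  Q : ℕ → Matrix ι ι 𝕜
  R : ℕ → Matrix ι ι 𝕜
  P : Matrix ι ι 𝕜
  r : ℕ → ι → 𝕜
  d : ℕ → η → 𝕜

namespace LQTracking

variable {𝕜 ι κ η : Type*} [CommRing 𝕜] [Fintype ι] [Fintype κ]
  (S : LQTracking 𝕜 ι κ η)

section Problem

variable [Fintype η]

/-- The total input `B k u k + E k d k` entering the dynamics and the cost at stage `k`. -/
def input (u : ℕ → κ → 𝕜) (k : ℕ) : ι → 𝕜 :=
  S.B k *ᵥ u k + S.E k *ᵥ S.d k

/-- The cost `J_N` of a state sequence and a control sequence. -/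
def cost (x : ℕ → ι → 𝕜) (u : ℕ → κ → 𝕜) : 𝕜 :=
  ∑ k ∈ range (S.N + 1),
      ((x k - S.r k) ⬝ᵥ S.Q k *ᵥ (x k - S.r k) + S.input u k ⬝ᵥ S.R k *ᵥ S.input u k)
    + (x (S.N + 1) - S.r (S.N + 1)) ⬝ᵥ S.P *ᵥ (x (S.N + 1) - S.r (S.N + 1))

/-- The control sequence `u` drives the system along the state sequence `x`. -/
def IsTrajectory (x : ℕ → ι → 𝕜) (u : ℕ → κ → 𝕜) : Prop :=
  ∀ k ≤ S.N, x (k + 1) = S.A k *ᵥ x k + S.B k *ᵥ u k + S.E k *ᵥ S.d k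

/-- The forward–backward difference equations of the maximum principle, for a state sequence `x`,
a control sequence `u` and a costate sequence `lam`. The costate equation is indexed from `0`, so
that no predecessor `k - 1` occurs. -/
structure IsFBDESolution (x : ℕ → ι → 𝕜) (u : ℕ → κ → 𝕜) (lam : ℕ → ι → 𝕜) : Prop where
  stationarity : ∀ k ≤ S.N, 0 = ((S.B k)ᵀ * S.R k * S.B k) *ᵥ u k + (S.B k)ᵀ *ᵥ lam k
    + ((S.B k)ᵀ * S.R k * S.E k) *ᵥ S.d k
  costate : ∀ k < S.N, lam k =
    S.Q (k + 1) *ᵥ (x (k + 1) - S.r (k + 1)) + (S.A (k + 1))ᵀ *ᵥ lam (k + 1)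
  trajectory : S.IsTrajectory x u
  terminal : lam S.N = S.P *ᵥ (x (S.N + 1) - S.r (S.N + 1))

/-- Half of the first variation of the cost at `(x, u)` in the direction `(y, v)`, for variations
with `y 0 = 0`: the initial state is fixed, so the stage-`0` state term is left out. -/
def firstVariation (x : ℕ → ι → 𝕜) (u : ℕ → κ → 𝕜) (y : ℕ → ι → 𝕜) (v : ℕ → κ → 𝕜) : 𝕜 :=
  ∑ k ∈ range S.N, y (k + 1) ⬝ᵥ S.Q (k + 1) *ᵥ (x (k + 1) - S.r (k + 1))
    + ∑ k ∈ range (S.N + 1), S.B k *ᵥ v k ⬝ᵥ S.R k *ᵥ S.input u k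
    + y (S.N + 1) ⬝ᵥ S.P *ᵥ (x (S.N + 1) - S.r (S.N + 1))

end Problem

/-- The second-order part of the cost in the direction `(y, v)`, for variations with `y 0 = 0`. -/
def secondVariation (y : ℕ → ι → 𝕜) (v : ℕ → κ → 𝕜) : 𝕜 :=
  ∑ k ∈ range S.N, y (k + 1) ⬝ᵥ S.Q (k + 1) *ᵥ y (k + 1)
    + ∑ k ∈ range (S.N + 1), v k ⬝ᵥ ((S.B k)ᵀ * S.R k * S.B k) *ᵥ v k
    + y (S.N + 1) ⬝ᵥ S.P *ᵥ y (S.N + 1)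

variable {S}

theorem secondVariation_nonneg [PartialOrder 𝕜] [IsOrderedAddMonoid 𝕜] [StarRing 𝕜]
    [TrivialStar 𝕜] (hQ : ∀ k < S.N, (S.Q (k + 1)).PosSemidef)
    (hBRB : ∀ k ≤ S.N, ((S.B k)ᵀ * S.R k * S.B k).PosSemidef) (hP : S.P.PosSemidef)
    (y : ℕ → ι → 𝕜) (v : ℕ → κ → 𝕜) : 0 ≤ S.secondVariation y v :=
  add_nonneg
    (add_nonneg
      (sum_nonneg fun k hk ↦
        dotProduct_mulVec_self_nonneg_of_posSemidef (hQ k (mem_range.mp hk)) (y (k + 1)))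
      (sum_nonneg fun k hk ↦
        dotProduct_mulVec_self_nonneg_of_posSemidef (hBRB k (mem_range_succ_iff.mp hk)) (v k)))
    (dotProduct_mulVec_self_nonneg_of_posSemidef hP (y (S.N + 1)))

variable [Fintype η] {x x' y : ℕ → ι → 𝕜} {u u' v : ℕ → κ → 𝕜} {lam : ℕ → ι → 𝕜}

theorem IsTrajectory.sub_succ (hx' : S.IsTrajectory x' u') (hx : S.IsTrajectory x u) {k : ℕ}
    (hk : k ≤ S.N) :
    x' (k + 1) - x (k + 1) = S.A k *ᵥ (x' k - x k) + S.B k *ᵥ (u' k - u k) := by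
  rw [hx' k hk, hx k hk, mulVec_sub, mulVec_sub]
  abel

theorem input_dotProduct_mulVec_input_eq {k : ℕ} (hR : (S.R k).IsSymm) (u u' : ℕ → κ → 𝕜) :
    S.input u' k ⬝ᵥ S.R k *ᵥ S.input u' k =
      S.input u k ⬝ᵥ S.R k *ᵥ S.input u k
      + 2 * (S.B k *ᵥ (u' k - u k) ⬝ᵥ S.R k *ᵥ S.input u k)
      + (u' k - u k) ⬝ᵥ ((S.B k)ᵀ * S.R k * S.B k) *ᵥ (u' k - u k) := by
  have input_sub : S.input u' k - S.input u k = S.B k *ᵥ (u' k - u k) := by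
    rw [input, input, add_sub_add_right_eq_sub, mulVec_sub]
  rw [dotProduct_mulVec_self_eq_add_sub hR (S.input u k), input_sub, Matrix.mul_assoc,
    ← mulVec_mulVec, ← mulVec_mulVec, dotProduct_transpose_mulVec,
    dotProduct_comm (S.R k *ᵥ S.B k *ᵥ _)]

theorem cost_eq_add_firstVariation_add_secondVariation
    (hQ : ∀ k < S.N, (S.Q (k + 1)).IsSymm) (hR : ∀ k ≤ S.N, (S.R k).IsSymm) (hP : S.P.IsSymm)
    (h0 : x' 0 = x 0) :
    S.cost x' u' = S.cost x u + 2 * S.firstVariation x u (x' - x) (u' - u)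
      + S.secondVariation (x' - x) (u' - u) := by
  have state_term : ∀ k ∈ range S.N,
      (x' (k + 1) - S.r (k + 1)) ⬝ᵥ S.Q (k + 1) *ᵥ (x' (k + 1) - S.r (k + 1)) =
        (x (k + 1) - S.r (k + 1)) ⬝ᵥ S.Q (k + 1) *ᵥ (x (k + 1) - S.r (k + 1))
        + 2 * ((x' (k + 1) - x (k + 1)) ⬝ᵥ S.Q (k + 1) *ᵥ (x (k + 1) - S.r (k + 1)))
        + (x' (k + 1) - x (k + 1)) ⬝ᵥ S.Q (k + 1) *ᵥ (x' (k + 1) - x (k + 1)) := fun k hk ↦ by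
    simpa only [sub_sub_sub_cancel_right] using dotProduct_mulVec_self_eq_add_sub
      (hQ k (mem_range.mp hk)) (x (k + 1) - S.r (k + 1)) (x' (k + 1) - S.r (k + 1))
  have input_term := fun k (hk : k ∈ range (S.N + 1)) ↦
    input_dotProduct_mulVec_input_eq (hR k (mem_range_succ_iff.mp hk)) u u'
  have final_term := dotProduct_mulVec_self_eq_add_sub hP
    (x (S.N + 1) - S.r (S.N + 1)) (x' (S.N + 1) - S.r (S.N + 1))
  rw [sub_sub_sub_cancel_right] at final_term
  simp only [cost, firstVariation, secondVariation, Pi.sub_apply, sum_add_distrib]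
  rw [sum_range_succ' (fun k ↦ (x' k - S.r k) ⬝ᵥ _), sum_range_succ' (fun k ↦ (x k - S.r k) ⬝ᵥ _),
    h0, sum_congr rfl state_term, sum_congr rfl input_term, final_term]
  simp only [sum_add_distrib, ← mul_sum]
  ring

theorem IsFBDESolution.mulVec_dotProduct_mulVec_input (h : S.IsFBDESolution x u lam) {k : ℕ}
    (hk : k ≤ S.N) (v : κ → 𝕜) :
    S.B k *ᵥ v ⬝ᵥ S.R k *ᵥ S.input u k = -(S.B k *ᵥ v ⬝ᵥ lam k) := by
  have gradient_eq_zero : (S.B k)ᵀ *ᵥ (S.R k *ᵥ S.input u k + lam k) = 0 := by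
    rw [h.stationarity k hk]
    simp only [input, mulVec_add, mulVec_mulVec, Matrix.mul_assoc]
    abel
  rw [← add_eq_zero_iff_eq_neg, ← dotProduct_add, dotProduct_comm, ← dotProduct_transpose_mulVec,
    gradient_eq_zero, dotProduct_zero]

theorem IsFBDESolution.firstVariation_eq_zero (h : S.IsFBDESolution x u lam) (h0 : y 0 = 0)
    (hy : ∀ k ≤ S.N, y (k + 1) = S.A k *ᵥ y k + S.B k *ᵥ v k) :
    S.firstVariation x u y v = 0 := by
  -- Started at stage `1`, where the costate equation begins to hold.
  have adjoint := sum_dotProduct_add_dotProduct_eq_of_adjoint (y := fun k ↦ y (k + 1))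
    (fun k hk ↦ hy (k + 1) hk) h.costate
  have y_one : y 1 = S.B 0 *ᵥ v 0 := by simpa [h0] using hy 0 (Nat.zero_le _)
  have input_sum : ∑ k ∈ range (S.N + 1), S.B k *ᵥ v k ⬝ᵥ S.R k *ᵥ S.input u k =
      -∑ k ∈ range (S.N + 1), S.B k *ᵥ v k ⬝ᵥ lam k := by
    rw [← sum_neg_distrib]
    exact sum_congr rfl fun k hk ↦ h.mulVec_dotProduct_mulVec_input (mem_range_succ_iff.mp hk) (v k)
  rw [firstVariation, input_sum, sum_range_succ', ← h.terminal]
  simp only [zero_add, y_one] at adjoint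
  linear_combination adjoint

end LQTracking

theorem FBDE_implies_optimality_general {𝕜 ι κ η : Type*} [CommRing 𝕜] [PartialOrder 𝕜]
    [IsOrderedAddMonoid 𝕜] [StarRing 𝕜] [TrivialStar 𝕜] [Fintype ι] [Fintype κ] [Fintype η]
    (S : LQTracking 𝕜 ι κ η)
    (hQ : ∀ k < S.N, (S.Q (k + 1)).PosSemidef)
    (hR : ∀ k ≤ S.N, (S.R k).IsSymm)
    (hBRB : ∀ k ≤ S.N, ((S.B k)ᵀ * S.R k * S.B k).PosSemidef)
    (hP : S.P.PosSemidef)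
    {x x' : ℕ → ι → 𝕜} {u u' : ℕ → κ → 𝕜} {lam : ℕ → ι → 𝕜}
    (hx : S.IsFBDESolution x u lam) (h0 : x' 0 = x 0) (hx' : S.IsTrajectory x' u') :
    S.cost x u ≤ S.cost x' u' := by
  have first : S.firstVariation x u (x' - x) (u' - u) = 0 :=
    hx.firstVariation_eq_zero (sub_eq_zero.mpr h0) fun k hk ↦ hx'.sub_succ hx.trajectory hk
  have second : 0 ≤ S.secondVariation (x' - x) (u' - u) :=
    LQTracking.secondVariation_nonneg hQ hBRB hP _ _
  rw [LQTracking.cost_eq_add_firstVariation_add_secondVariation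
    (fun k hk ↦ isSymm_of_isHermitian (hQ k hk).isHermitian) hR
    (isSymm_of_isHermitian hP.isHermitian) h0, first, mul_zero, add_zero]
  exact le_add_of_nonneg_right second

/-- **Sufficiency of the forward–backward difference equations (from Lemma 1).**
If sequences `(x_k)`, `(u_k)`, `(λ_k)` satisfy the FBDEs of the maximum principle,
then the control `(u_k)` minimizes the cost `J_N` over all control sequences driving
the system from the same initial state with the same disturbances. -/
theorem FBDE_implies_optimality
    (n m N : ℕ)
    (A Q R : Matrix (Fin n) (Fin n) ℝ)
    (B E : Matrix (Fin n) (Fin m) ℝ)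
    (r : Fin n → ℝ)
    (PN1 : Matrix (Fin n) (Fin n) ℝ)
    (hQ : Q.PosSemidef) (hR : R.PosSemidef) (hPN1 : PN1.PosSemidef)
    (d : ℕ → Fin m → ℝ)
    -- the cost functional `J_N`
    (J : (ℕ → Fin n → ℝ) → (ℕ → Fin m → ℝ) → ℝ)
    (hJ : ∀ x u, J x u =
        (∑ k ∈ range (N + 1),
          ((x k - r) ⬝ᵥ (Q *ᵥ (x k - r))
            + (B *ᵥ u k + E *ᵥ d k) ⬝ᵥ (R *ᵥ (B *ᵥ u k + E *ᵥ d k))))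
        + (x (N + 1) - r) ⬝ᵥ (PN1 *ᵥ (x (N + 1) - r)))
    -- sequences satisfying the FBDEs
    (x : ℕ → Fin n → ℝ) (u : ℕ → Fin m → ℝ) (lam : ℕ → Fin n → ℝ)
    (hstat : ∀ k ≤ N, 0 = (Bᵀ * R * B) *ᵥ u k + Bᵀ *ᵥ lam k + (Bᵀ * R * E) *ᵥ d k)
    (hcostate : ∀ k, 1 ≤ k → k ≤ N → lam (k - 1) = Q *ᵥ (x k - r) + Aᵀ *ᵥ lam k)
    (hdyn : ∀ k ≤ N, x (k + 1) = A *ᵥ x k + B *ᵥ u k + E *ᵥ d k)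
    (hterm : lam N = PN1 *ᵥ (x (N + 1) - r)) :
    ∀ (x' : ℕ → Fin n → ℝ) (u' : ℕ → Fin m → ℝ),
      x' 0 = x 0 →
      (∀ k ≤ N, x' (k + 1) = A *ᵥ x' k + B *ᵥ u' k + E *ᵥ d k) →
      J x u ≤ J x' u' := by
  intro x' u' h0 hx'
  let S : LQTracking ℝ (Fin n) (Fin m) (Fin m) :=
    ⟨N, fun _ ↦ A, fun _ ↦ B, fun _ ↦ E, fun _ ↦ Q, fun _ ↦ R, PN1, fun _ ↦ r, d⟩
  have fbde : S.IsFBDESolution x u lam :=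
    ⟨hstat, fun k hk ↦ hcostate (k + 1) (Nat.le_add_left 1 k) hk, hdyn, hterm⟩
  rw [hJ, hJ]
  exact FBDE_implies_optimality_general S (fun _ _ ↦ hQ)
    (fun _ _ ↦ isSymm_of_isHermitian hR.isHermitian) (fun _ _ ↦ hR.conjTranspose_mul_mul_same B)
    hPN1 fbde h0 hx'
end

section
/- Suppose Υ_{k} is positive definite and along a trajectory of the system the control at time k equals u_k = −Υ_k^{-1}M_k x_k − Υ_k^{-1}h_k while the costate satisfies λ_k = P_{k+1}x_{k+1} + f_{k+1}. Then the adjoint update λ_{k-1} := Q(x_k − r) + A'λ_k satisfies λ_{k-1} = P_k x_k + f_k, where P_k = Q + A'P_{k+1}A − M_k'Υ_k^{-1}M_k and f_k = A'P_{k+1}E d_k + A'f_{k+1} − M_k'Υ_k^{-1}h_k − Q r. -/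
open Matrix

/-!
Under an affine feedback `u = -K x - v` the next state, hence the costate, is affine in `x`. In the
adjoint update the control enters through `Aᵀ P B`, which is `Mᵀ` for `M = Bᵀ P A` because `P` is
symmetric. The control in the theorem is the feedback with `K = Υ⁻¹ M` and `v = Υ⁻¹ h`.
-/

section AffineFeedback

variable {ι κ δ α : Type*} [Fintype ι]

theorem mulVec_add_mulVec_affine_feedback [Fintype κ] [NonUnitalRing α]
    (A : Matrix δ ι α) (B : Matrix δ κ α) (K : Matrix κ ι α) (x : ι → α) (v : κ → α) :
    A *ᵥ x + B *ᵥ (-(K *ᵥ x) - v) = (A - B * K) *ᵥ x - B *ᵥ v := by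
  rw [mulVec_sub, mulVec_neg, mulVec_mulVec, sub_mulVec]
  abel

theorem transpose_transpose_mul_mul_of_isSymm [NonUnitalCommSemiring α] {P : Matrix ι ι α}
    (hP : P.IsSymm) (B : Matrix ι κ α) (A : Matrix ι δ α) : (Bᵀ * P * A)ᵀ = Aᵀ * P * B := by
  rw [transpose_mul, transpose_mul, transpose_transpose, hP.eq, Matrix.mul_assoc]

theorem costate_update_identity_general [Fintype κ] [Fintype δ] [NonUnitalCommRing α]
    {A P Q : Matrix ι ι α} {B : Matrix ι κ α} {E : Matrix ι δ α} {M K : Matrix κ ι α}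
    {x x' lam f r : ι → α} {u v : κ → α} {d : δ → α}
    (hP : P.IsSymm) (hM : M = Bᵀ * P * A) (hu : u = -(K *ᵥ x) - v)
    (hx' : x' = A *ᵥ x + B *ᵥ u + E *ᵥ d) (hlam : lam = P *ᵥ x' + f) :
    Q *ᵥ (x - r) + Aᵀ *ᵥ lam =
      (Q + Aᵀ * P * A - Mᵀ * K) *ᵥ x + ((Aᵀ * P * E) *ᵥ d + Aᵀ *ᵥ f - Mᵀ *ᵥ v - Q *ᵥ r) := by
  have hMt : Mᵀ = Aᵀ * P * B := by rw [hM, transpose_transpose_mul_mul_of_isSymm hP]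
  have hclosed : x' = (A - B * K) *ᵥ x - B *ᵥ v + E *ᵥ d := by
    rw [hx', hu, mulVec_add_mulVec_affine_feedback]
  have hadjoint : Aᵀ *ᵥ lam =
      (Aᵀ * P * A - Mᵀ * K) *ᵥ x - Mᵀ *ᵥ v + (Aᵀ * P * E) *ᵥ d + Aᵀ *ᵥ f :=
    calc Aᵀ *ᵥ lam = (Aᵀ * P) *ᵥ x' + Aᵀ *ᵥ f := by rw [hlam, mulVec_add, mulVec_mulVec]
      _ = (Aᵀ * P * (A - B * K)) *ᵥ x - (Aᵀ * P * B) *ᵥ v + (Aᵀ * P * E) *ᵥ d + Aᵀ *ᵥ f := by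
        rw [hclosed, mulVec_add, mulVec_sub, mulVec_mulVec, mulVec_mulVec, mulVec_mulVec]
      _ = (Aᵀ * P * A - Mᵀ * K) *ᵥ x - Mᵀ *ᵥ v + (Aᵀ * P * E) *ᵥ d + Aᵀ *ᵥ f := by
        rw [Matrix.mul_sub, ← Matrix.mul_assoc, ← hMt]
  rw [hadjoint, mulVec_sub, add_sub_assoc Q, add_mulVec]
  abel

end AffineFeedback

/-- **Costate update identity (equation (16)/(22) of the paper).**
If `Υ = B'(R+P_{k+1})B` is positive definite, the control equals
`u_k = −Υ⁻¹M x_k − Υ⁻¹h` and the costate satisfies `λ_k = P_{k+1}x_{k+1} + f_{k+1}`,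
then `λ_{k-1} := Q(x_k − r) + A'λ_k = P_k x_k + f_k`, with `P_k` given by the Riccati
step and `f_k` by the backward feedforward recursion. -/
theorem costate_update_identity
    (n m : ℕ)
    (A Q R : Matrix (Fin n) (Fin n) ℝ)
    (B E : Matrix (Fin n) (Fin m) ℝ)
    (r : Fin n → ℝ)
    (hQ : Q.PosSemidef) (hR : R.PosSemidef)
    -- data at time `k`: `P_{k+1}`, `f_{k+1}`, `d_k`, state, control, costate
    (Pk1 : Matrix (Fin n) (Fin n) ℝ) (hPk1 : Pk1.PosSemidef)
    (fk1 : Fin n → ℝ) (dk : Fin m → ℝ)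
    (Υ : Matrix (Fin m) (Fin m) ℝ) (M : Matrix (Fin m) (Fin n) ℝ)
    (hΥ : Υ = Bᵀ * (R + Pk1) * B)
    (hM : M = Bᵀ * Pk1 * A)
    (hΥpos : Υ.PosDef)
    (hk : Fin m → ℝ)
    (hhk : hk = (Bᵀ * (R + Pk1) * E) *ᵥ dk + Bᵀ *ᵥ fk1)
    (xk : Fin n → ℝ) (uk : Fin m → ℝ) (xk1 : Fin n → ℝ) (lamk : Fin n → ℝ)
    (huk : uk = -(Υ⁻¹ *ᵥ (M *ᵥ xk)) - Υ⁻¹ *ᵥ hk)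
    (hxk1 : xk1 = A *ᵥ xk + B *ᵥ uk + E *ᵥ dk)
    (hlamk : lamk = Pk1 *ᵥ xk1 + fk1)
    -- `P_k` and `f_k` from the backward recursions
    (Pk : Matrix (Fin n) (Fin n) ℝ)
    (hPk : Pk = Q + Aᵀ * Pk1 * A - Mᵀ * Υ⁻¹ * M)
    (fk : Fin n → ℝ)
    (hfk : fk = (Aᵀ * Pk1 * E) *ᵥ dk + Aᵀ *ᵥ fk1 - Mᵀ *ᵥ (Υ⁻¹ *ᵥ hk) - Q *ᵥ r) :
    Q *ᵥ (xk - r) + Aᵀ *ᵥ lamk = Pk *ᵥ xk + fk := by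
  rw [hPk, hfk, Matrix.mul_assoc Mᵀ]
  exact costate_update_identity_general (isHermitian_iff_isSymm.mp hPk1.isHermitian) hM
    (by rw [huk, mulVec_mulVec]) hxk1 hlamk
end
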